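/- arXiv:2409.14948 — 4 statements merged into one kernel-verified Lean document; each statement's English description precedes it below -/
import Mathlib

section
/- Let d, k be integers with 1 ≤ k ≤ d and let c : ℤ^d → ℤ be a d-dimensional configuration. Assume that for every (k−1)-dimensional linear subspace V ⊆ ℝ^d the configuration c has a periodizer f whose support satisfies supp(f) ∩ V = {0} (intersecting supp(f), viewed inside ℝ^d, with V). Then there exist finitely many functions c_1, …, c_m : ℤ^d → ℤ, each of which is k-periodic, such that c = c_1 + … + c_m. -/
namespace PaperFormal

/-- View an integer vector inside `ℝ^d`. -/
def intVecR {d : ℕ} (u : Fin d → ℤ) : Fin d → ℝ := fun i => (u i : ℝ)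

/-- View an integer vector inside `ℚ^d`. -/
def intVecQ {d : ℕ} (u : Fin d → ℤ) : Fin d → ℚ := fun i => (u i : ℚ)

/-- A (Laurent) polynomial: a finitely supported integer-valued function on `ℤ^d`. -/
def IsPoly {d : ℕ} (f : (Fin d → ℤ) → ℤ) : Prop := (Function.support f).Finite

/-- The product `(fc)(u) = ∑_v f(v) · c(u − v)` of a polynomial `f` with `c : ℤ^d → ℤ`. -/
noncomputable def polyApply {d : ℕ} (f : (Fin d → ℤ) → ℤ) (c : (Fin d → ℤ) → ℤ) :
    (Fin d → ℤ) → ℤ := fun u => ∑ᶠ v, f v * c (u - v)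

/-- The product `(fc)(u) = ∑_v f(v) · c(u − v)` of a polynomial `f` with `c : ℤ^d → ℂ`. -/
noncomputable def polyApplyC {d : ℕ} (f : (Fin d → ℤ) → ℤ) (c : (Fin d → ℤ) → ℂ) :
    (Fin d → ℤ) → ℂ := fun u => ∑ᶠ v, (f v : ℂ) * c (u - v)

/-- `c` is `v`-periodic: `c(u + v) = c(u)` for all `u`. -/
def Periodic {d : ℕ} (c : (Fin d → ℤ) → ℤ) (v : Fin d → ℤ) : Prop := ∀ u, c (u + v) = c u

/-- `c : ℤ^d → ℂ` is `v`-periodic. -/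
def PeriodicC {d : ℕ} (c : (Fin d → ℤ) → ℂ) (v : Fin d → ℤ) : Prop := ∀ u, c (u + v) = c u

/-- `c` is `k`-periodic: it has `k` periods that are linearly independent over `ℚ`. -/
def KPeriodic {d : ℕ} (k : ℕ) (c : (Fin d → ℤ) → ℤ) : Prop :=
  ∃ v : Fin k → (Fin d → ℤ),
    (LinearIndependent ℚ fun i => intVecQ (v i)) ∧ ∀ i, Periodic c (v i)

/-- `c` is strongly periodic: it is `d`-periodic. -/
def StronglyPeriodic {d : ℕ} (c : (Fin d → ℤ) → ℤ) : Prop := KPeriodic d c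

/-- `c : ℤ^d → ℂ` is strongly periodic. -/
def StronglyPeriodicC {d : ℕ} (c : (Fin d → ℤ) → ℂ) : Prop :=
  ∃ v : Fin d → (Fin d → ℤ),
    (LinearIndependent ℚ fun i => intVecQ (v i)) ∧ ∀ i, PeriodicC c (v i)

/-- Two nonzero integer vectors are non-parallel if they are linearly independent over `ℚ`. -/
def NonParallel {d : ℕ} (v w : Fin d → ℤ) : Prop :=
  LinearIndependent ℚ ![intVecQ v, intVecQ w]

/-- A line polynomial in direction `v`: a polynomial whose support contains at least two points
and is contained in `u + ℚv` for some `u ∈ ℤ^d`. -/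
def IsLinePoly {d : ℕ} (f : (Fin d → ℤ) → ℤ) (v : Fin d → ℤ) : Prop :=
  IsPoly f ∧ v ≠ 0 ∧ 2 ≤ (Function.support f).ncard ∧
    ∃ u : Fin d → ℤ, ∀ w ∈ Function.support f, ∃ q : ℚ, intVecQ w = intVecQ u + q • intVecQ v

/-- The difference polynomial `X^v − 1`: value `1` at `v`, value `−1` at `0`, and `0` elsewhere. -/
def diffPoly {d : ℕ} (v : Fin d → ℤ) : (Fin d → ℤ) → ℤ :=
  fun u => if u = v then 1 else if u = 0 then -1 else 0

/-- `c : ℤ^d → ℂ` is periodic in direction `v`: it is `kv`-periodic for some nonzero integer `k`. -/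
def PeriodicInDirC {d : ℕ} (c : (Fin d → ℤ) → ℂ) (v : Fin d → ℤ) : Prop :=
  ∃ k : ℤ, k ≠ 0 ∧ PeriodicC c (k • v)

/-- `c : ℤ^d → ℂ` is `V`-periodic for a linear subspace `V ⊆ ℝ^d`: it is periodic in
direction `v` for every nonzero integer vector `v` lying in `V`. -/
def VPeriodicC {d : ℕ} (V : Submodule ℝ (Fin d → ℝ)) (c : (Fin d → ℤ) → ℂ) : Prop :=
  ∀ v : Fin d → ℤ, v ≠ 0 → intVecR v ∈ V → PeriodicInDirC c v

/-- The discrete cube `C_m + t`. -/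
def cube {d : ℕ} (m : ℕ) (t : Fin d → ℤ) : Set (Fin d → ℤ) :=
  {u | ∀ i, |u i - t i| ≤ (m : ℤ)}

/-- `c : ℤ^d → ℤ` is sparse: for some positive integer `a`,
`|supp(c) ∩ (C_m + t)| ≤ a·m` for all positive `m` and all `t`. -/
def Sparse {d : ℕ} (c : (Fin d → ℤ) → ℤ) : Prop :=
  ∃ a : ℕ, 0 < a ∧ ∀ m : ℕ, 0 < m → ∀ t : Fin d → ℤ,
    (Function.support c ∩ cube m t).ncard ≤ a * m

/-- A `v`-fiber: a function whose support is contained in `w + ℚv` for some `w ∈ ℤ^d`. -/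
def IsFiber {d : ℕ} (e : (Fin d → ℤ) → ℤ) (v : Fin d → ℤ) : Prop :=
  ∃ w : Fin d → ℤ, ∀ x ∈ Function.support e, ∃ q : ℚ, intVecQ x = intVecQ w + q • intVecQ v

/-- `c` is a sum of finitely many periodic `v`-fibers. -/
def FinSumPeriodicFibers {d : ℕ} (v : Fin d → ℤ) (c : (Fin d → ℤ) → ℤ) : Prop :=
  ∃ (r : ℕ) (e : Fin r → ((Fin d → ℤ) → ℤ)), c = ∑ j, e j ∧
    ∀ j, IsFiber (e j) v ∧ ∃ w : Fin d → ℤ, w ≠ 0 ∧ Periodic (e j) w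

end PaperFormal
namespace PaperFormal

section ActBasics
variable {G : Type*} [AddCommGroup G] {A : Type*} [AddCommGroup A]

/-- The translation operators as a monoid homomorphism. -/
noncomputable def shiftHom (G A : Type*) [AddCommGroup G] [AddCommGroup A] :
    Multiplicative G →* Module.End ℤ (G → A) where
  toFun u :=
    { toFun := fun c x => c (x + u.toAdd)
      map_add' := fun _ _ => rfl
      map_smul' := fun _ _ => rfl }
  map_one' := by
    ext c x
    simp
  map_mul' u v := by
    ext c x
    simp [add_assoc]

/-- The action of Laurent polynomials on functions. -/
noncomputable def act (A : Type*) [AddCommGroup A] :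
    AddMonoidAlgebra ℤ G →ₐ[ℤ] Module.End ℤ (G → A) :=
  AddMonoidAlgebra.lift ℤ _ G (shiftHom G A)

/-- The monomial. -/
noncomputable def mX (u : G) : AddMonoidAlgebra ℤ G := AddMonoidAlgebra.single u 1

/-- The difference polynomial. -/
noncomputable def mD (u : G) : AddMonoidAlgebra ℤ G := mX u - 1

lemma mX_add (u v : G) : mX (u + v) = mX u * mX v := by
  simp [mX, AddMonoidAlgebra.single_mul_single]

lemma mX_zero : mX (0 : G) = 1 := rfl

lemma mX_nsmul (n : ℕ) (u : G) : mX (n • u) = mX u ^ n := by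
  induction n with
  | zero => simp [mX_zero]
  | succ n ih => rw [succ_nsmul, mX_add, ih, pow_succ]

@[simp] lemma act_single (u : G) (n : ℤ) (c : G → A) (x : G) :
    act A (AddMonoidAlgebra.single u n) c x = n • c (x + u) := by
  simp [act, AddMonoidAlgebra.lift_single, shiftHom]

@[simp] lemma act_mX (u : G) (c : G → A) (x : G) : act A (mX u) c x = c (x + u) := by
  simp [mX]

@[simp] lemma act_mD (u : G) (c : G → A) (x : G) : act A (mD u) c x = c (x + u) - c x := by
  simp [mD]

lemma act_mul (p q : AddMonoidAlgebra ℤ G) (c : G → A) :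
    act A (p * q) c = act A p (act A q c) := by
  simp

lemma act_comm (p q : AddMonoidAlgebra ℤ G) (c : G → A) :
    act A p (act A q c) = act A q (act A p c) := by
  rw [← act_mul, mul_comm, act_mul]

lemma act_nat {B : Type*} [AddCommGroup B] (φ : A →+ B) (p : AddMonoidAlgebra ℤ G) (c : G → A) :
    act B p (fun x => φ (c x)) = fun x => φ (act A p c x) := by
  induction p using AddMonoidAlgebra.induction_linear with
  | zero => ext x; simp
  | add f g hf hg =>
    ext x
    simp [hf, hg]
  | single a b =>
    ext x
    simp

/-- The annihilator ideal. -/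
noncomputable def annI (c : G → A) : Ideal (AddMonoidAlgebra ℤ G) where
  carrier := {p | act A p c = 0}
  add_mem' := by
    intro a b ha hb
    simp only [Set.mem_setOf_eq] at *
    simp [ha, hb]
  zero_mem' := by simp
  smul_mem' := by
    intro a b hb
    simp only [Set.mem_setOf_eq] at *
    rw [smul_eq_mul, act_mul, hb, map_zero]

lemma mem_annI (p : AddMonoidAlgebra ℤ G) (c : G → A) : p ∈ annI c ↔ act A p c = 0 := Iff.rfl

lemma mD_mem_annI {u : G} {c : G → A} : mD u ∈ annI c ↔ ∀ x, c (x + u) = c x := by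
  rw [mem_annI]
  constructor
  · intro h x
    have := congrFun h x
    rwa [act_mD, Pi.zero_apply, sub_eq_zero] at this
  · intro h
    ext x
    rw [act_mD, h, sub_self, Pi.zero_apply]

lemma mD_dvd_nsmul (n : ℕ) (u : G) : mD u ∣ mD (n • u) := by
  rw [mD, mD, mX_nsmul]
  exact sub_one_dvd_pow_sub_one _ _ 

lemma mD_neg (u : G) : mD (-u) = - mX (-u) * mD u := by
  have : mX (-u) * mX u = 1 := by rw [← mX_add]; simp [mX_zero]
  simp only [mD]
  linear_combination this

lemma mD_dvd_zsmul (n : ℤ) (u : G) : mD u ∣ mD (n • u) := by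
  obtain ⟨n, rfl | rfl⟩ := n.eq_nat_or_neg
  · simpa using mD_dvd_nsmul n u
  · rw [neg_smul, mD_neg]
    exact Dvd.dvd.mul_left (by simpa using mD_dvd_nsmul n u) _

lemma annI_le_act (p : AddMonoidAlgebra ℤ G) (c : G → A) : annI c ≤ annI (act A p c) := by
  intro q hq
  rw [mem_annI] at *
  rw [act_comm, hq, map_zero]

lemma act_eq_sum (p : AddMonoidAlgebra ℤ G) (c : G → A) (x : G) :
    act A p c x = ∑ u ∈ p.coeff.support, p.coeff u • c (x + u) := by
  conv_lhs => rw [← AddMonoidAlgebra.sum_single p]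
  simp [Finsupp.sum, Finset.sum_apply]

end ActBasics
end PaperFormal

namespace PaperFormal

section Dilation
variable {G : Type*} [AddCommGroup G]

/-- dilated polynomial -/
noncomputable def dil (a : G → ℤ) (S : Finset G) (n : ℕ) : AddMonoidAlgebra ℤ G :=
  ∑ v ∈ S, a v • mX (n • v)

lemma dil_pow (a : G → ℤ) (S : Finset G) (n p : ℕ) (hp : p.Prime) :
    ∃ h, (dil a S n) ^ p = dil a S (n * p) + (p : AddMonoidAlgebra ℤ G) * h := by
  classical
  induction S using Finset.induction_on with
  | empty => exact ⟨0, by simp [dil, hp.ne_zero]⟩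
  | insert v S hv ih =>
    obtain ⟨h, hh⟩ := ih
    have e1 : ∀ m, dil a (insert v S) m = a v • mX (m • v) + dil a S m := by
      intro m
      simp [dil, Finset.sum_insert hv]
    obtain ⟨r, hr⟩ := exists_add_pow_prime_eq hp (a v • mX (n • v)) (dil a S n)
    have : ∃ t, (a v) ^ p = a v + p * t := by
      have := Fact.mk hp
      have : (p : ℤ) ∣ a v ^ p - a v := by
        rw [← ZMod.intCast_zmod_eq_zero_iff_dvd]
        push_cast
        rw [ZMod.pow_card, sub_self]
      obtain ⟨t, ht⟩ := this
      exact ⟨t, by linarith⟩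
    obtain ⟨t, ht⟩ := this
    have e2 : (a v • mX (n • v)) ^ p = a v • mX ((n * p) • v) +
        (p : AddMonoidAlgebra ℤ G) * (t • mX ((n * p) • v)) := by
      rw [smul_pow, ← mX_nsmul, ← mul_smul, mul_comm p n, ht, add_smul, mul_smul]
      congr 1
      simp [mul_assoc]
    rw [e1, hr, hh, e2, e1]
    exact ⟨t • mX ((n * p) • v) + h + a v • mX (n • v) * dil a S n * r, by ring⟩

lemma dil_bound (a : G → ℤ) (S : Finset G) (n : ℕ) (c : G → ℤ) (B : ℤ)
    (hB : ∀ x, |c x| ≤ B) (x : G) : |act ℤ (dil a S n) c x| ≤ (∑ v ∈ S, |a v|) * B := by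
  simp only [dil, map_sum, map_zsmul, LinearMap.sum_apply, Finset.sum_apply, LinearMap.smul_apply,
    Pi.smul_apply, act_mX]
  refine (Finset.abs_sum_le_sum_abs _ _).trans ?_
  rw [Finset.sum_mul]
  refine Finset.sum_le_sum fun v _ => ?_
  rw [smul_eq_mul, abs_mul]
  exact mul_le_mul_of_nonneg_left (hB _) (abs_nonneg _)

lemma dil_prime_step (a : G → ℤ) (S : Finset G) (n p : ℕ) (hp : p.Prime) (c : G → ℤ) (B : ℤ)
    (hB : ∀ x, |c x| ≤ B) (hpB : (∑ v ∈ S, |a v|) * B < p) (h : dil a S n ∈ annI c) :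
    dil a S (n * p) ∈ annI c := by
  obtain ⟨q, hq⟩ := dil_pow a S n p hp
  have h1 : (dil a S n) ^ p ∈ annI c := Ideal.pow_mem_of_mem _ h _ hp.pos
  rw [hq, mem_annI] at h1
  rw [mem_annI]
  ext x
  have h2 := congrFun h1 x
  have h3 := dil_bound a S (n * p) c B hB x
  have h4 : act ℤ (dil a S (n * p)) c x = p * (- act ℤ q c x) := by
    rw [← nsmul_eq_mul, map_add, map_nsmul] at h2
    simp at h2
    linarith
  rw [Pi.zero_apply]
  refine Int.eq_zero_of_abs_lt_dvd ⟨_, h4⟩ (lt_of_le_of_lt h3 hpB)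

lemma dil_many (a : G → ℤ) (S : Finset G) (c : G → ℤ) (B : ℤ) (K : ℕ)
    (hB : ∀ x, |c x| ≤ B) (hK : (∑ v ∈ S, |a v|) * B ≤ K) (h : dil a S 1 ∈ annI c) (j : ℕ) :
    dil a S (1 + j * K.factorial) ∈ annI c := by
  have key : ∀ n : ℕ, n ≠ 0 → (∀ p : ℕ, p.Prime → p ∣ n → K < p) → dil a S n ∈ annI c := by
    intro n
    induction n using induction_on_primes with
    | zero => intro h; exact absurd rfl h
    | one => intro _ _; exact h
    | prime_mul p n hp ih =>
      intro h0 hq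
      rw [mul_comm]
      refine dil_prime_step a S n p hp c B hB ?_ (ih (by rintro rfl; simp at h0)
        (fun q hq1 hq2 => hq q hq1 (hq2.mul_left _)))
      have := hq p hp (dvd_mul_right _ _)
      have : (K : ℤ) < p := by exact_mod_cast this
      linarith
  refine key _ (by omega) fun p hp hpd => ?_
  by_contra hlt
  have h1 : p ∣ K.factorial := (hp.dvd_factorial).2 (by omega)
  have h2 : p ∣ 1 := (Nat.dvd_add_left (h1.mul_left j)).1 hpd
  exact hp.one_lt.ne' (Nat.dvd_one.1 h2)

lemma vander {R ι : Type*} [CommRing R] (I : Ideal R) (y : ι → R) (T : Finset ι) :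
    ∀ (b0 : R) (b : ι → R), (∀ j : ℕ, b0 + ∑ v ∈ T, b v * y v ^ j ∈ I) →
      b0 * ∏ v ∈ T, (1 - y v) ∈ I := by
  classical
  induction T using Finset.induction_on with
  | empty => intro b0 b h; simpa using h 0
  | insert v T hv ih =>
    intro b0 b h
    rw [Finset.prod_insert hv, ← mul_assoc]
    refine ih _ (fun w => b w * (y w - y v)) fun j => ?_
    have h1 := I.sub_mem (h (j + 1)) (I.mul_mem_left (y v) (h j))
    convert h1 using 1
    rw [Finset.sum_insert hv, Finset.sum_insert hv]
    have : ∑ w ∈ T, b w * (y w - y v) * y w ^ j =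
        ∑ w ∈ T, b w * y w ^ (j + 1) - y v * ∑ w ∈ T, b w * y w ^ j := by
      rw [Finset.mul_sum, ← Finset.sum_sub_distrib]
      exact Finset.sum_congr rfl fun w _ => by ring
    rw [this]
    ring

lemma exists_line_ann [DecidableEq G] (a : G → ℤ) (S : Finset G) (c : G → ℤ) (B : ℤ)
    (hB : ∀ x, |c x| ≤ B) (hS : (0 : G) ∉ S) (h0 : a 0 ≠ 0)
    (h : dil a (insert 0 S) 1 ∈ annI c) :
    ∃ M : ℕ, M ≠ 0 ∧ ∏ v ∈ S, mD (M • v) ∈ annI c := by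
  classical
  obtain ⟨K, hK⟩ : ∃ K : ℕ, (∑ v ∈ insert 0 S, |a v|) * B ≤ K := ⟨_, Int.self_le_toNat _⟩
  have h1 := dil_many a (insert 0 S) c B K hB hK h
  refine ⟨K.factorial, Nat.factorial_ne_zero _, ?_⟩
  have h2 := vander (annI c) (fun v => mX (K.factorial • v)) S (a 0 • 1)
    (fun v => a v • mX v) (fun j => by
      convert h1 j using 1
      rw [dil, Finset.sum_insert hS]
      congr 1
      · simp [mX_zero]
      · refine Finset.sum_congr rfl fun v _ => ?_
        rw [← mX_nsmul, smul_mul_assoc, ← mX_add, add_smul, one_smul, mul_smul])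
  have h3 : ∏ v ∈ S, mD (K.factorial • v) =
      (-1) ^ S.card * ∏ v ∈ S, (1 - mX (K.factorial • v)) := by
    rw [← Finset.prod_const, ← Finset.prod_mul_distrib]
    exact Finset.prod_congr rfl fun v _ => by simp [mD]
  rw [h3]
  refine Ideal.mul_mem_left _ _ ?_
  rw [mem_annI] at h2 ⊢
  rw [smul_mul_assoc, one_mul, map_zsmul] at h2
  ext x
  have := congrFun h2 x
  simpa [h0] using this

end Dilation
end PaperFormal

namespace PaperFormal

section Hyp
variable {d : ℕ}

/-- the rational to real coordinate map -/
noncomputable def castQR (d : ℕ) : (Fin d → ℚ) →ₗ[ℚ] (Fin d → ℝ) where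
  toFun q := fun i => (q i : ℝ)
  map_add' a b := by ext i; simp
  map_smul' a b := by ext i; simp [Algebra.smul_def]

lemma castQR_intVecQ (u : Fin d → ℤ) : castQR d (intVecQ u) = intVecR u := by
  ext i
  simp [castQR, intVecQ, intVecR]

lemma intVecR_sub (u v : Fin d → ℤ) : intVecR (u - v) = intVecR u - intVecR v := by
  ext i; simp [intVecR]

lemma intVecR_neg (u : Fin d → ℤ) : intVecR (-u) = - intVecR u := by
  ext i; simp [intVecR]

lemma intVecR_nsmul (n : ℕ) (u : Fin d → ℤ) : intVecR (n • u) = (n : ℝ) • intVecR u := by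
  ext i; simp [intVecR]

lemma intVecR_eq_zero {u : Fin d → ℤ} (h : intVecR u = 0) : u = 0 := by
  ext i
  have := congrFun h i
  simpa [intVecR] using this

/-- The rational subspace of rational points of a real subspace. -/
noncomputable def ratPts (V : Submodule ℝ (Fin d → ℝ)) : Submodule ℚ (Fin d → ℚ) :=
  (V.restrictScalars ℚ).comap (castQR d)

lemma mem_ratPts {V : Submodule ℝ (Fin d → ℝ)} {u : Fin d → ℤ} :
    intVecQ u ∈ ratPts V ↔ intVecR u ∈ V := by
  simp [ratPts, castQR_intVecQ]

lemma exists_not_mem (V : Submodule ℝ (Fin d → ℝ)) (hV : Module.finrank ℝ V < d)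
    (v : Fin d → (Fin d → ℤ)) (hv : LinearIndependent ℚ fun i => intVecQ (v i)) :
    ∃ i, intVecR (v i) ∉ V := by
  by_contra! hcon
  have h1 : Submodule.span ℚ (Set.range fun i => intVecQ (v i)) = ⊤ :=
    hv.span_eq_top_of_card_eq_finrank' (by simp)
  have h2 : ratPts V = ⊤ := by
    rw [eq_top_iff, ← h1, Submodule.span_le]
    rintro _ ⟨i, rfl⟩
    exact mem_ratPts.2 (hcon i)
  have h3 : V = ⊤ := by
    rw [eq_top_iff, ← (Pi.basisFun ℝ (Fin d)).span_eq, Submodule.span_le]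
    rintro _ ⟨i, rfl⟩
    have : (Pi.single i 1 : Fin d → ℚ) ∈ ratPts V := by rw [h2]; trivial
    have h4 : castQR d (Pi.single i 1) ∈ V := this
    suffices h5 : (Pi.basisFun ℝ (Fin d)) i = castQR d (Pi.single i 1) by
      rw [h5]; exact h4
    ext j
    by_cases hij : j = i
    · subst hij; simp [castQR]
    · simp [castQR, hij]
  rw [h3] at hV
  simp at hV

lemma exists_list (V : Submodule ℝ (Fin d → ℝ)) (hV : Module.finrank ℝ V < d)
    (c : (Fin d → ℤ) → ℤ) (B : ℤ) (hB : ∀ x, |c x| ≤ B)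
    (h : ∃ f : (Fin d → ℤ) → ℤ, IsPoly f ∧ StronglyPeriodic (polyApply f c) ∧
        (intVecR '' Function.support f) ∩ (V : Set (Fin d → ℝ)) = {0}) :
    ∃ us : List (Fin d → ℤ), (∀ u ∈ us, intVecR u ∉ V) ∧ (us.map mD).prod ∈ annI c := by
  classical
  obtain ⟨f, hf, ⟨v, hv, hper⟩, hsupp⟩ := h
  obtain ⟨i, hi⟩ := exists_not_mem V hV v hv
  have hf' : (Function.support f).Finite := hf
  -- choice of the multiple
  obtain ⟨N, hN⟩ : ∃ N : ℕ, ∀ w ∈ Function.support f, intVecR (N • v i - w) ∉ V := by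
    by_contra! hcon
    choose w hw1 hw2 using hcon
    have hinj : Function.Injective w := by
      intro n m hnm
      by_contra hne
      have h1 := V.sub_mem (hw2 n) (hw2 m)
      rw [hnm, intVecR_sub, intVecR_sub, intVecR_nsmul, intVecR_nsmul, sub_sub_sub_cancel_right,
        ← sub_smul] at h1
      rw [Submodule.smul_mem_iff _ (sub_ne_zero.2 (by exact_mod_cast hne))] at h1
      exact hi h1
    exact Set.infinite_univ ((hf'.subset (by
      rintro _ ⟨n, -, rfl⟩; exact hw1 n) : (w '' Set.univ).Finite).of_finite_image hinj.injOn)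
  have hf0 : f 0 ≠ 0 := by
    have : (0 : Fin d → ℝ) ∈ (intVecR '' Function.support f) ∩ (V : Set (Fin d → ℝ)) := by
      rw [hsupp]; rfl
    obtain ⟨⟨u, hu, hu0⟩, -⟩ := this
    rw [intVecR_eq_zero hu0] at hu
    exact hu
  have hf1 : ∀ u, intVecR u ∈ V → u ≠ 0 → f (-u) = 0 := by
    intro u hu hu0
    by_contra hne
    have : intVecR (-u) ∈ (intVecR '' Function.support f) ∩ (V : Set (Fin d → ℝ)) :=
      ⟨⟨_, hne, rfl⟩, by rw [intVecR_neg]; exact V.neg_mem hu⟩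
    rw [hsupp] at this
    exact hu0 (neg_eq_zero.1 (intVecR_eq_zero this))
  set q0 : AddMonoidAlgebra ℤ (Fin d → ℤ) := ∑ w ∈ hf'.toFinset, f w • mX (-w) with hq0
  have hc0 : ∀ u, q0.coeff u = f (-u) := by
    intro u
    rw [hq0, AddMonoidAlgebra.coeff_sum, Finset.sum_apply']
    simp only [mX, AddMonoidAlgebra.coeff_smul_apply, AddMonoidAlgebra.coeff_single,
      Finsupp.single_apply, smul_eq_mul, mul_ite, mul_one, mul_zero]
    by_cases hu : f (-u) = 0
    · rw [hu]
      refine Finset.sum_eq_zero fun w _ => ?_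
      split_ifs with h
      · rw [← hu, ← h, neg_neg]
      · rfl
    · rw [Finset.sum_eq_single (-u)]
      · simp
      · intro b _ hb
        rw [if_neg]
        rintro rfl
        simp at hb
      · intro h
        simp at h
        exact absurd h hu
  have hact : act ℤ q0 c = polyApply f c := by
    ext u
    rw [polyApply, finsum_eq_sum_of_support_subset (s := hf'.toFinset)]
    · simp [hq0, Finset.sum_apply, sub_eq_add_neg]
    · intro w hw
      simp only [Set.Finite.coe_toFinset]
      intro h0
      simp [h0] at hw
  set q := mD (N • v i) * q0 with hq
  have hqc : ∀ u, q.coeff u = f (-(u - N • v i)) - f (-u) := by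
    intro u
    rw [hq, mD, sub_mul, one_mul, ← hc0, ← hc0, AddMonoidAlgebra.coeff_sub, mX,
      Finsupp.sub_apply, AddMonoidAlgebra.coeff_single_mul_eq_mul_coeff (m₂ := u - N • v i)]
    · simp
    · intro a _
      constructor
      · rintro rfl; simp
      · rintro rfl; simp
  have hqV : ∀ u, intVecR u ∈ V → q.coeff u = - f (-u) := by
    intro u hu
    rw [hqc]
    have : f (-(u - N • v i)) = 0 := by
      by_contra hne
      refine hN _ hne ?_
      convert hu using 2
      abel
    rw [this, zero_sub]
  have hqann : q ∈ annI c := by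
    rw [mem_annI, hq, act_mul, hact]
    have h1 : mD (v i) ∈ annI (polyApply f c) := mD_mem_annI.2 (hper i)
    exact Ideal.mem_of_dvd _ (mD_dvd_nsmul N (v i)) h1
  have hq00 : q.coeff 0 ≠ 0 := by
    rw [hqV 0 (by rw [show intVecR (0 : Fin d → ℤ) = 0 by ext i; simp [intVecR]]; exact V.zero_mem)]
    simpa using hf0
  obtain ⟨M, hM, hMann⟩ := exists_line_ann (fun u => q.coeff u) (q.coeff.support.erase 0) c B hB
    (by simp) hq00 (by
      rw [Finset.insert_erase (by simpa using hq00)]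
      convert hqann using 1
      conv_rhs => rw [← AddMonoidAlgebra.sum_coeff_single q]
      simp [dil, Finsupp.sum, mX])
  refine ⟨(q.coeff.support.erase 0).toList.map (fun w => M • w), ?_, ?_⟩
  · intro u hu
    simp only [List.mem_map, Finset.mem_toList, Finset.mem_erase, Finsupp.mem_support_iff] at hu
    obtain ⟨w, ⟨hw0, hw⟩, rfl⟩ := hu
    rw [intVecR_nsmul, Submodule.smul_mem_iff _ (by exact_mod_cast hM)]
    intro hwV
    rw [hqV w hwV, hf1 w hwV hw0] at hw
    simp at hw
  · rw [List.map_map]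
    convert hMann using 1
    exact Finset.prod_map_toList _ _

end Hyp
end PaperFormal

namespace PaperFormal
open Filter Topology

section Mean
variable {G : Type*} [AddCommGroup G]

lemma act_smul (a : ℝ) (p : AddMonoidAlgebra ℤ G) (c : G → ℝ) :
    act ℝ p (a • c) = a • act ℝ p c :=
  act_nat (AddMonoidHom.mulLeft a) p c

/-- finite averages -/
noncomputable def avg (c : G → ℝ) (v : G) (N : ℕ) : G → ℝ :=
  ((N + 1 : ℝ)⁻¹) • ∑ n ∈ Finset.range (N + 1), act ℝ (mX (n • v)) c

lemma avg_apply (c : G → ℝ) (v : G) (N : ℕ) (u : G) :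
    avg c v N u = (N + 1 : ℝ)⁻¹ * ∑ n ∈ Finset.range (N + 1), c (u + n • v) := by
  simp [avg, Finset.sum_apply]

lemma act_avg (p : AddMonoidAlgebra ℤ G) (c : G → ℝ) (v : G) (N : ℕ) :
    act ℝ p (avg c v N) = avg (act ℝ p c) v N := by
  rw [avg, act_smul, map_sum, avg]
  congr 1
  exact Finset.sum_congr rfl fun n _ => act_comm _ _ _

lemma avg_bound (c : G → ℝ) (B : ℝ) (hB : ∀ x, |c x| ≤ B) (v : G) (N : ℕ) (u : G) :
    |avg c v N u| ≤ B := by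
  have hN : (0 : ℝ) < N + 1 := by positivity
  rw [avg_apply, abs_mul, abs_of_pos (inv_pos.2 hN), inv_mul_le_iff₀ hN]
  refine (Finset.abs_sum_le_sum_abs _ _).trans ?_
  refine (Finset.sum_le_sum fun n _ => hB _).trans ?_
  simp

lemma per_nsmul {A : Type*} {c : G → A} {v : G} (h : ∀ x, c (x + v) = c x) (n : ℕ) (x : G) :
    c (x + n • v) = c x := by
  induction n with
  | zero => simp
  | succ n ih => rw [succ_nsmul, ← add_assoc, h, ih]

lemma avg_periodic (c : G → ℝ) (v : G) (h : ∀ x, c (x + v) = c x) (N : ℕ) : avg c v N = c := by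
  ext u
  rw [avg_apply]
  simp only [per_nsmul h]
  have hN : (N + 1 : ℝ) ≠ 0 := by positivity
  simp [hN]

lemma mean_exists (c : G → ℝ) (B : ℝ) (hB : ∀ x, |c x| ≤ B) (v : G) :
    ∃ e : G → ℝ, (∀ x, |e x| ≤ B) ∧ (∀ x, e (x + v) = e x) ∧
      ∀ p : AddMonoidAlgebra ℤ G, (∀ x, act ℝ p c (x + v) = act ℝ p c x) →
        act ℝ p e = act ℝ p c := by
  have hlim : ∀ u, ∃ y ∈ Set.Icc (-B) B,
      Tendsto (fun N => avg c v N u) (hyperfilter ℕ : Filter ℕ) (𝓝 y) := by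
    intro u
    have h1 : Ultrafilter.map (fun N => avg c v N u) (hyperfilter ℕ) ≤ 𝓟 (Set.Icc (-B) B) := by
      rw [le_principal_iff]
      change (fun N => avg c v N u) ⁻¹' Set.Icc (-B) B ∈ (hyperfilter ℕ : Filter ℕ)
      exact Filter.mem_of_superset Filter.univ_mem
        fun N _ => abs_le.1 (avg_bound c B hB v N u)
    obtain ⟨y, hy, h2⟩ := (isCompact_Icc (a := -B) (b := B)).ultrafilter_le_nhds _ h1
    exact ⟨y, hy, h2⟩
  choose e he1 he2 using hlim
  have hact : ∀ (p : AddMonoidAlgebra ℤ G) (u : G),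
      Tendsto (fun N => avg (act ℝ p c) v N u) (hyperfilter ℕ : Filter ℕ) (𝓝 (act ℝ p e u)) := by
    intro p u
    simp only [← act_avg, act_eq_sum]
    refine tendsto_finsetSum _ fun w _ => ?_
    exact (he2 _).const_smul _
  refine ⟨e, fun x => abs_le.2 (he1 x), ?_, ?_⟩
  · intro x
    have h1 := hact (mD v) x
    have h2 : Tendsto (fun N => avg (act ℝ (mD v) c) v N x) (hyperfilter ℕ : Filter ℕ) (𝓝 0) := by
      have h3 : Tendsto (fun N : ℕ => (2 * B) / ((N : ℝ) + 1)) atTop (𝓝 0) :=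
        tendsto_const_nhds.div_atTop (tendsto_atTop_add_const_right _ _ tendsto_natCast_atTop_atTop)
      have h4 : Tendsto (fun N => avg (act ℝ (mD v) c) v N x) atTop (𝓝 0) := by
        refine squeeze_zero_norm (fun N => ?_) h3
        have h5 : ∑ n ∈ Finset.range (N + 1), act ℝ (mD v) c (x + n • v) =
            c (x + (N + 1) • v) - c x := by
          have := Finset.sum_range_sub (fun n => c (x + n • v)) (N + 1)
          simp only [zero_smul, add_zero] at this
          rw [← this]
          refine Finset.sum_congr rfl fun n _ => ?_
          rw [act_mD, succ_nsmul, add_assoc]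
        have hN : (0 : ℝ) < N + 1 := by positivity
        rw [avg_apply, h5, Real.norm_eq_abs, abs_mul, abs_of_pos (inv_pos.2 hN), div_eq_inv_mul]
        refine mul_le_mul_of_nonneg_left ?_ (inv_pos.2 hN).le
        refine (abs_sub _ _).trans ?_
        linarith [hB (x + (N + 1) • v), hB x]
      exact h4.mono_left (by rw [← Nat.cofinite_eq_atTop]; exact hyperfilter_le_cofinite)
    have := tendsto_nhds_unique h1 h2
    rw [act_mD] at this
    linarith
  · intro p hp
    ext u
    have h1 := hact p u
    simp only [avg_periodic _ v hp] at h1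
    exact tendsto_nhds_unique h1 tendsto_const_nhds

lemma decomp_list (us : List G) : ∀ (c : G → ℝ) (B : ℝ), (∀ x, |c x| ≤ B) →
    (us.map mD).prod ∈ annI c →
    ∃ cs : Fin us.length → G → ℝ, c = ∑ i, cs i ∧ ∀ i, (∀ x, cs i (x + us.get i) = cs i x) ∧
      (∃ B', ∀ x, |cs i x| ≤ B') ∧ annI c ≤ annI (cs i) := by
  induction us with
  | nil =>
    intro c B hB h
    refine ⟨fun i => 0, ?_, fun i => i.elim0⟩
    simpa [mem_annI] using h
  | cons u us ih =>
    intro c B hB h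
    obtain ⟨e, he1, he2, he3⟩ := mean_exists c B hB u
    rw [List.map_cons, List.prod_cons, mem_annI, act_mul, ← mem_annI, mD_mem_annI] at h
    have h1 := he3 _ h
    have hann : annI c ≤ annI e := by
      intro p hp
      rw [mem_annI] at hp ⊢
      rw [he3 p (by simp [hp]), hp]
    have hann2 : annI c ≤ annI (c - e) := by
      intro p hp
      have h2 := hann hp
      rw [mem_annI] at hp h2 ⊢
      rw [map_sub, hp, h2, sub_zero]
    obtain ⟨cs, hcs1, hcs2⟩ := ih (c - e) (B + B)
      (fun x => (abs_sub _ _).trans (add_le_add (hB x) (he1 x)))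
      (by rw [mem_annI, map_sub, h1, sub_self])
    refine ⟨Fin.cons e cs, ?_, ?_⟩
    · refine Eq.trans ?_ (Fin.sum_univ_succ (n := us.length) _).symm
      simp only [Fin.cons_zero, Fin.cons_succ]
      rw [← hcs1]
      abel
    · intro i
      refine Fin.cases ?_ (fun j => ?_) i
      · exact ⟨he2, ⟨B, he1⟩, hann⟩
      · exact ⟨(hcs2 j).1, (hcs2 j).2.1, hann2.trans (hcs2 j).2.2⟩

end Mean
end PaperFormal

namespace PaperFormal

section RealDecomp
variable {d : ℕ}

/-- `k`-periodicity for real functions. -/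
def RPer (k : ℕ) (r : (Fin d → ℤ) → ℝ) : Prop :=
  ∃ v : Fin k → (Fin d → ℤ),
    (LinearIndependent ℚ fun i => intVecQ (v i)) ∧ ∀ i x, r (x + v i) = r x

lemma exists_subspace (V0 : Submodule ℝ (Fin d → ℝ)) (n : ℕ) (hn : Module.finrank ℝ V0 ≤ n)
    (hnd : n ≤ d) : ∃ V, V0 ≤ V ∧ Module.finrank ℝ V = n := by
  induction n, hn using Nat.le_induction with
  | base => exact ⟨V0, le_rfl, rfl⟩
  | succ n hn ih =>
    obtain ⟨V, hV, hVn⟩ := ih (by omega)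
    have hne : V ≠ ⊤ := by
      rintro rfl
      simp at hVn
      omega
    obtain ⟨x, -, hx⟩ := SetLike.exists_of_lt (lt_top_iff_ne_top.2 hne)
    refine ⟨V ⊔ Submodule.span ℝ {x}, hV.trans le_sup_left, ?_⟩
    rw [Submodule.finrank_sup_span_singleton hx, hVn]

lemma real_decomp {k : ℕ} (hkd : k ≤ d) (I : Ideal (AddMonoidAlgebra ℤ (Fin d → ℤ)))
    (h : ∀ V : Submodule ℝ (Fin d → ℝ), Module.finrank ℝ V = k - 1 →
      ∃ us : List (Fin d → ℤ), (∀ u ∈ us, intVecR u ∉ V) ∧ (us.map mD).prod ∈ I) (n : ℕ) :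
    ∀ j, j + n = k → ∀ (r : (Fin d → ℤ) → ℝ) (B : ℝ), (∀ x, |r x| ≤ B) → I ≤ annI r → RPer j r →
      r ∈ Submodule.span ℝ {r : (Fin d → ℤ) → ℝ | RPer k r} := by
  induction n with
  | zero =>
    intro j hj r B _ _ hr
    obtain rfl : j = k := by omega
    exact Submodule.subset_span hr
  | succ n ih =>
    intro j hj r B hB hI hr
    obtain ⟨v, hv, hper⟩ := hr
    obtain ⟨V, hV, hVk⟩ := exists_subspace
      (Submodule.span ℝ (Set.range fun i => intVecR (v i))) (k - 1)
      ((finrank_range_le_card _).trans (by simp; omega)) (by omega)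
    obtain ⟨us, hus, husI⟩ := h V hVk
    obtain ⟨cs, hcs, hcs2⟩ := decomp_list us r B hB (hI husI)
    rw [hcs]
    refine Submodule.sum_mem _ fun i _ => ?_
    obtain ⟨h1, ⟨B', h2⟩, h3⟩ := hcs2 i
    refine ih (j + 1) (by omega) (cs i) B' h2 (hI.trans h3) ?_
    refine ⟨Fin.cons (us.get i) v, ?_, ?_⟩
    · have : (fun l => intVecQ ((Fin.cons (us.get i) v : Fin (j + 1) → (Fin d → ℤ)) l)) =
          (Fin.cons (intVecQ (us.get i)) (fun l => intVecQ (v l)) : Fin (j + 1) → (Fin d → ℚ)) := by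
        ext l : 1
        refine Fin.cases ?_ (fun m => ?_) l
        · simp
        · simp
      rw [this]
      refine hv.finCons fun hmem => hus _ (List.get_mem us i) ?_
      rw [← mem_ratPts]
      refine Submodule.span_le.2 ?_ hmem
      rintro _ ⟨l, rfl⟩
      exact mem_ratPts.2 (hV (Submodule.subset_span ⟨l, rfl⟩))
    · intro l
      refine Fin.cases ?_ (fun m => ?_) l
      · exact h1
      · exact mD_mem_annI.1 (h3 (mD_mem_annI.2 (hper m)))

end RealDecomp
end PaperFormal

namespace PaperFormal

section Comp
variable {G H : Type*} [AddCommGroup G] [AddCommGroup H] {A : Type*} [AddCommGroup A]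

/-- push forward of Laurent polynomials -/
noncomputable def pushR (φ : H →+ G) : AddMonoidAlgebra ℤ H →+* AddMonoidAlgebra ℤ G :=
  AddMonoidAlgebra.mapDomainRingHom ℤ φ

lemma pushR_mX (φ : H →+ G) (u : H) : pushR φ (mX u) = mX (φ u) := by
  simp [pushR, mX]

lemma pushR_mD (φ : H →+ G) (u : H) : pushR φ (mD u) = mD (φ u) := by
  simp [mD, pushR_mX]

lemma act_comp (φ : H →+ G) (p : AddMonoidAlgebra ℤ H) (c : G → A) (g : G) (h : H) :
    act A p (fun h => c (g + φ h)) h = act A (pushR φ p) c (g + φ h) := by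
  induction p using AddMonoidAlgebra.induction_linear generalizing h with
  | zero => simp
  | add p q hp hq => simp [hp, hq]
  | single a b => simp [pushR, add_assoc]

lemma mem_annI_slices (φ : H →+ G) (p : AddMonoidAlgebra ℤ H) (c : G → A) :
    pushR φ p ∈ annI c ↔ ∀ g, p ∈ annI (fun h => c (g + φ h)) := by
  constructor
  · intro hp g
    rw [mem_annI] at *
    ext h
    rw [act_comp, hp]
    rfl
  · intro hp
    rw [mem_annI]
    ext g
    have := congrFun (hp g) 0
    rw [act_comp] at this
    simpa using this

lemma mD_add (a b : G) : mD (a + b) = mX a * mD b + mD a := by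
  simp only [mD, mX_add]
  ring

lemma mD_add_rad {I : Ideal (AddMonoidAlgebra ℤ G)} {a b : G} (ha : mD a ∈ I.radical)
    (hb : mD b ∈ I.radical) : mD (a + b) ∈ I.radical := by
  rw [mD_add]
  exact Ideal.add_mem _ (Ideal.mul_mem_left _ _ hb) ha

lemma mD_zsmul_mem {I : Ideal (AddMonoidAlgebra ℤ G)} {a : G} (n : ℤ) (ha : mD a ∈ I) :
    mD (n • a) ∈ I := Ideal.mem_of_dvd _ (mD_dvd_zsmul n a) ha

end Comp

section Solve
variable {G H : Type*} [AddCommGroup G] [AddCommGroup H] {A : Type*} [AddCommGroup A]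

lemma antidiff (p : ℤ → A) : ∃ Z : ℤ → A, Z 0 = 0 ∧ ∀ j, Z (j + 1) = Z j + p j := by
  refine ⟨fun j => ∑ i ∈ Finset.range j.toNat, p i - ∑ i ∈ Finset.range (-j).toNat, p (-(i + 1)),
    by simp, ?_⟩
  intro j
  obtain ⟨n, rfl | rfl⟩ := j.eq_nat_or_neg
  · have h1 : ((n : ℤ) + 1).toNat = n + 1 := by omega
    have h2 : (-((n : ℤ) + 1)).toNat = 0 := by omega
    have h3 : (-(n : ℤ)).toNat = 0 := by omega
    simp only [h1, h2, h3, Int.toNat_natCast, Finset.sum_range_succ, Finset.sum_range_zero]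
    abel
  · cases n with
    | zero => simp
    | succ n =>
      have h1 : (-((n + 1 : ℕ) : ℤ) + 1).toNat = 0 := by omega
      have h2 : (-(-((n + 1 : ℕ) : ℤ) + 1)).toNat = n := by omega
      have h3 : (-((n + 1 : ℕ) : ℤ)).toNat = 0 := by omega
      have h4 : (- -((n + 1 : ℕ) : ℤ)).toNat = n + 1 := by omega
      simp only [h1, h2, h3, h4, Finset.sum_range_succ, Finset.sum_range_zero]
      push_cast
      abel

lemma solve (φ : H →+ G) (u : G) (hu : ∀ (M : ℤ) (h : H), M • u = φ h → M = 0)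
    (E : AddSubgroup (H → A)) (p : G → A) (hp : ∀ g, (fun h => p (g + φ h)) ∈ E) :
    ∃ P : G → A, act A (mD u) P = p ∧ ∀ g, (fun h => P (g + φ h)) ∈ E := by
  choose Z hZ0 hZ using fun y : G => antidiff (fun j : ℤ => p (y + j • u))
  set K : AddSubgroup G := φ.range ⊔ AddSubgroup.zmultiples u with hK
  have hdec : ∀ x : G, ∃ (h : H) (j : ℤ),
      x = (Quotient.out (x : G ⧸ K) : G) + φ h + j • u := by
    intro x
    have h1 : -(Quotient.out (x : G ⧸ K) : G) + x ∈ K := by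
      rw [← QuotientAddGroup.eq]
      exact Quotient.out_eq _
    rw [hK, AddSubgroup.mem_sup] at h1
    obtain ⟨y, ⟨h, rfl⟩, z, hz, hyz⟩ := h1
    obtain ⟨j, rfl⟩ := AddSubgroup.mem_zmultiples_iff.1 hz
    refine ⟨h, j, ?_⟩
    rw [add_assoc, hyz]
    abel
  choose η J hJ using hdec
  have hq : ∀ x y : G, y - x ∈ K → (Quotient.out (x : G ⧸ K) : G) = Quotient.out (y : G ⧸ K) := by
    intro x y hxy
    congr 1
    rw [QuotientAddGroup.eq]
    convert hxy using 1
    abel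
  have hJ1 : ∀ x, J (x + u) = J x + 1 := by
    intro x
    have h1 := hJ x
    have h2 := hJ (x + u)
    rw [← hq x (x + u) (by
      rw [add_sub_cancel_left]
      exact AddSubgroup.mem_sup_right (AddSubgroup.mem_zmultiples u))] at h2
    have h3 := hu (J (x + u) - J x - 1) (η x - η (x + u)) (by
      rw [map_sub]
      linear_combination (norm := module) h1 - h2)
    linarith
  have hJ2 : ∀ x h, J (x + φ h) = J x := by
    intro x h
    have h1 := hJ x
    have h2 := hJ (x + φ h)
    rw [← hq x (x + φ h) (by
      rw [add_sub_cancel_left]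
      exact AddSubgroup.mem_sup_left ⟨h, rfl⟩)] at h2
    have h3 := hu (J (x + φ h) - J x) (η x + h - η (x + φ h)) (by
      rw [map_sub, map_add]
      linear_combination (norm := module) h1 - h2)
    linarith
  refine ⟨fun x => Z (x - J x • u) (J x), ?_, ?_⟩
  · ext x
    rw [act_mD, hJ1, add_smul, one_smul, add_sub_add_right_eq_sub, hZ, add_sub_cancel_left,
      sub_add_cancel]
  · intro g
    simp only [hJ2]
    have key : ∀ (j : ℤ) (y : G), (fun h => Z (y + φ h) j) ∈ E := by
      intro j y
      have hs : ∀ j : ℤ, (fun h => p (y + φ h + j • u)) ∈ E := by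
        intro j
        convert hp (y + j • u) using 3
        abel
      induction j using Int.induction_on with
      | zero => 
        simp only [hZ0]
        exact E.zero_mem
      | succ n ih =>
        simp only [hZ]
        exact E.add_mem ih (hs _)
      | pred n ih =>
        have : (fun h => Z (y + φ h) (-(n : ℤ) - 1)) = (fun h => Z (y + φ h) (-(n : ℤ))) -
            (fun h => p (y + φ h + (-(n : ℤ) - 1) • u)) := by
          ext h
          have := hZ (y + φ h) (-(n : ℤ) - 1)
          rw [sub_add_cancel] at this
          rw [Pi.sub_apply, this, add_sub_cancel_right]
        rw [this]
        exact E.sub_mem ih (hs _)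
    convert key (J g) (g - J g • u) using 3
    abel

end Solve

section Newton
variable {A : Type*} [AddCommGroup A]

lemma newton (n : ℕ) : ∀ (c : ℤ → A), mD (1 : ℤ) ^ n ∈ annI c → ∀ j : ℤ,
    c j = ∑ a ∈ Finset.range n, (Ring.choose j a) • act A (mD (1 : ℤ) ^ a) c 0 := by
  induction n with
  | zero =>
    intro c hc j
    rw [pow_zero, mem_annI] at hc
    have := congrFun hc j
    simpa using this
  | succ n ih =>
    intro c hc
    have hstep : ∀ j : ℤ, act A (mD (1 : ℤ)) c j =
        ∑ a ∈ Finset.range n, (Ring.choose j a) • act A (mD (1 : ℤ) ^ (a + 1)) c 0 := by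
      intro j
      rw [ih (act A (mD (1 : ℤ)) c) (by rw [mem_annI, ← act_mul, ← pow_succ]; exact hc) j]
      refine Finset.sum_congr rfl fun a _ => ?_
      rw [← act_mul, ← pow_succ]
    set F : ℤ → A := fun j => ∑ a ∈ Finset.range (n + 1),
      (Ring.choose j a) • act A (mD (1 : ℤ) ^ a) c 0 with hF
    have hF0 : F 0 = c 0 := by
      simp only [hF]
      rw [Finset.sum_eq_single 0]
      · simp
      · intro b _ hb
        rw [Ring.choose_zero_pos _ (Nat.pos_of_ne_zero hb), zero_smul]
      · simp
    have hFs : ∀ j, F (j + 1) - F j = c (j + 1) - c j := by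
      intro j
      rw [← act_mD 1 c, hstep]
      simp only [hF]
      rw [Finset.sum_range_succ', Finset.sum_range_succ']
      simp only [Ring.choose_zero_right, Ring.choose_succ_succ, add_smul, Finset.sum_add_distrib]
      abel
    intro j
    change c j = F j
    induction j using Int.induction_on with
    | zero => exact hF0.symm
    | succ i ih2 =>
      have := hFs i
      rw [ih2, sub_left_inj] at this
      exact this.symm
    | pred i ih2 =>
      have := hFs (-(i : ℤ) - 1)
      rw [sub_add_cancel, ih2, sub_right_inj] at this
      exact this.symm

lemma choose_ann (a : ℕ) : mD (1 : ℤ) ^ (a + 1) ∈ annI (fun j : ℤ => Ring.choose j a) := by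
  induction a with
  | zero =>
    rw [zero_add, pow_one, mD_mem_annI]
    simp
  | succ a ih =>
    rw [mem_annI] at *
    rw [pow_succ, act_mul]
    have : act ℤ (mD (1 : ℤ)) (fun j : ℤ => Ring.choose j (a + 1)) =
        fun j : ℤ => Ring.choose j a := by
      ext j
      rw [act_mD, Ring.choose_succ_succ, add_sub_cancel_right]
    rw [this, ih]

end Newton
end PaperFormal

namespace PaperFormal

section QDataSec
variable {d : ℕ}

lemma intVecQ_add (u v : Fin d → ℤ) : intVecQ (u + v) = intVecQ u + intVecQ v := by
  ext i; simp [intVecQ]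

lemma intVecQ_zero : intVecQ (0 : Fin d → ℤ) = 0 := by
  ext i; simp [intVecQ]

lemma intVecQ_neg (u : Fin d → ℤ) : intVecQ (-u) = - intVecQ u := by
  ext i; simp [intVecQ]

lemma intVecQ_zsmul (n : ℤ) (u : Fin d → ℤ) : intVecQ (n • u) = (n : ℚ) • intVecQ u := by
  ext i; simp [intVecQ]

lemma intVecQ_nsmul (n : ℕ) (u : Fin d → ℤ) : intVecQ (n • u) = (n : ℚ) • intVecQ u := by
  ext i; simp [intVecQ]

lemma intVecQ_inj {u v : Fin d → ℤ} (h : intVecQ u = intVecQ v) : u = v := by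
  ext i
  have := congrFun h i
  simpa [intVecQ] using this

lemma linInd_scale {k : ℕ} (v : Fin k → (Fin d → ℤ)) (M : Fin k → ℕ) (hM : ∀ i, M i ≠ 0)
    (hv : LinearIndependent ℚ fun i => intVecQ (v i)) :
    LinearIndependent ℚ fun i => intVecQ (M i • v i) := by
  have := hv.units_smul (fun i => Units.mk0 (M i : ℚ) (by exact_mod_cast hM i))
  convert this using 1
  ext i : 1
  rw [intVecQ_nsmul]
  rfl

/-- Data describing a space of functions that are nice along a lattice of directions. -/
structure QData (d k : ℕ) (W : Submodule ℚ (Fin d → ℚ)) where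
  H : Type
  [inst : AddCommGroup H]
  φ : H →+ (Fin d → ℤ)
  inj : Function.Injective φ
  span : Submodule.span ℚ (Set.range fun h => intVecQ (φ h)) = W
  ι : Type
  [fin : Fintype ι]
  f : ι → H → ℤ
  g1 : ∀ s, ∃ v : Fin k → H, LinearIndependent ℚ (fun i => intVecQ (φ (v i))) ∧
    ∀ i h, f s (h + v i) = f s h
  g3 : ∀ s u, mD u ∈ (annI (f s)).radical

attribute [instance] QData.inst QData.fin

variable {k : ℕ} {W : Submodule ℚ (Fin d → ℚ)}

/-- real span of the basic functions -/
noncomputable def QData.fspan (D : QData d k W) : Submodule ℝ (D.H → ℝ) :=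
  Submodule.span ℝ (Set.range fun s h => (D.f s h : ℝ))

/-- functions all of whose slices are in the span -/
noncomputable def QData.good (D : QData d k W) : Submodule ℝ ((Fin d → ℤ) → ℝ) where
  carrier := {r | ∀ g, (fun h => r (g + D.φ h)) ∈ D.fspan}
  add_mem' := fun ha hb g => D.fspan.add_mem (ha g) (hb g)
  zero_mem' := fun _ => D.fspan.zero_mem
  smul_mem' := fun a _ hb g => D.fspan.smul_mem a (hb g)

lemma QData.mem_good {D : QData d k W} {r : (Fin d → ℤ) → ℝ} :
    r ∈ D.good ↔ ∀ g, (fun h => r (g + D.φ h)) ∈ D.fspan := Iff.rfl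

lemma span_mult {H : Type*} [AddCommGroup H] (φ : H →+ (Fin d → ℤ)) {q : Fin d → ℚ}
    (hq : q ∈ Submodule.span ℚ (Set.range fun h => intVecQ (φ h))) :
    ∃ (M : ℕ) (h : H), M ≠ 0 ∧ (M : ℚ) • q = intVecQ (φ h) := by
  induction hq using Submodule.span_induction with
  | mem x hx =>
    obtain ⟨h, rfl⟩ := hx
    exact ⟨1, h, one_ne_zero, by simp⟩
  | zero => exact ⟨1, 0, one_ne_zero, by simp [intVecQ_zero]⟩
  | add x y _ _ hx hy =>
    obtain ⟨M, h, hM, e⟩ := hx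
    obtain ⟨M', h', hM', e'⟩ := hy
    refine ⟨M * M', M' • h + M • h', mul_ne_zero hM hM', ?_⟩
    rw [map_add, intVecQ_add, map_nsmul, map_nsmul, intVecQ_nsmul, intVecQ_nsmul, ← e, ← e']
    push_cast
    module
  | smul a x _ hx =>
    obtain ⟨M, h, hM, e⟩ := hx
    refine ⟨M * a.den, a.num • h, mul_ne_zero hM a.den_ne_zero, ?_⟩
    rw [map_zsmul, intVecQ_zsmul, ← e, smul_smul, smul_smul]
    congr 1
    have := Rat.den_ne_zero a
    have h2 : (a.den : ℚ) * a = a.num := Rat.den_mul_eq_num a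
    push_cast
    rw [← h2]
    ring

lemma QData.mult (D : QData d k W) {u : Fin d → ℤ} (hu : intVecQ u ∈ W) :
    ∃ (M : ℕ) (h : D.H), M ≠ 0 ∧ M • u = D.φ h := by
  rw [← D.span] at hu
  obtain ⟨M, h, hM, e⟩ := span_mult D.φ hu
  refine ⟨M, h, hM, intVecQ_inj ?_⟩
  rw [intVecQ_nsmul, e]

lemma QData.mem_W (D : QData d k W) (h : D.H) : intVecQ (D.φ h) ∈ W := by
  exact D.span.le (Submodule.subset_span ⟨h, rfl⟩)

lemma mem_of_zsmul {u : Fin d → ℤ} {M : ℤ} (hM : M ≠ 0) (h : intVecQ (M • u) ∈ W) :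
    intVecQ u ∈ W := by
  rw [intVecQ_zsmul, Submodule.smul_mem_iff _ (by exact_mod_cast hM)] at h
  exact h

lemma g1_comp {H H' : Type*} [AddCommGroup H] [AddCommGroup H'] (φ : H →+ (Fin d → ℤ))
    (ψ : H' →+ H) (hψ : ∀ h, ∃ (M : ℕ) (h' : H'), M ≠ 0 ∧ ψ h' = M • h) (f : H → ℤ)
    (hf : ∃ v : Fin k → H, LinearIndependent ℚ (fun i => intVecQ (φ (v i))) ∧
      ∀ i h, f (h + v i) = f h) :
    ∃ v : Fin k → H', LinearIndependent ℚ (fun i => intVecQ (φ (ψ (v i)))) ∧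
      ∀ i h, f (ψ (h + v i)) = f (ψ h) := by
  obtain ⟨v, hv, hf⟩ := hf
  choose M v' hM hv' using fun i => hψ (v i)
  refine ⟨v', ?_, ?_⟩
  · simp only [hv', map_nsmul]
    exact linInd_scale _ M hM hv
  · intro i h
    rw [map_add, hv', per_nsmul (hf i)]

lemma g3_comp {H H' A : Type*} [AddCommGroup H] [AddCommGroup H'] [AddCommGroup A]
    (ψ : H' →+ H) (f : H → A) (u : H') (h : mD (ψ u) ∈ (annI f).radical) :
    mD u ∈ (annI (fun h => f (ψ h))).radical := by
  obtain ⟨m, hm⟩ := h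
  refine ⟨m, ?_⟩
  rw [← pushR_mD, ← map_pow, mem_annI_slices] at hm
  simpa using hm 0

lemma fspan_comp {H H' ι ι' : Type*} (ψ : H' → H) (f : ι → H → ℤ) (f' : ι' → H' → ℤ)
    (j : ι → ι') (hj : ∀ s h, f' (j s) h = f s (ψ h)) (q : H → ℝ)
    (hq : q ∈ Submodule.span ℝ (Set.range fun s h => (f s h : ℝ))) :
    (fun h => q (ψ h)) ∈ Submodule.span ℝ (Set.range fun s h => (f' s h : ℝ)) := by
  have : Submodule.span ℝ (Set.range fun s h => (f s h : ℝ)) ≤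
      (Submodule.span ℝ (Set.range fun s h => (f' s h : ℝ))).comap (LinearMap.funLeft ℝ ℝ ψ) := by
    rw [Submodule.span_le]
    rintro _ ⟨s, rfl⟩
    refine Submodule.subset_span ⟨j s, ?_⟩
    ext h
    simp [hj]
  exact this hq

lemma QData.merge (D D' : QData d k W) : ∃ D'' : QData d k W,
    D.good ≤ D''.good ∧ D'.good ≤ D''.good := by
  let K : AddSubgroup (D.H × D'.H) :=
    (D.φ.comp (AddMonoidHom.fst _ _)).eqLocus (D'.φ.comp (AddMonoidHom.snd _ _))
  let p1 : K →+ D.H := (AddMonoidHom.fst _ _).comp K.subtype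
  let p2 : K →+ D'.H := (AddMonoidHom.snd _ _).comp K.subtype
  have hp : ∀ x : K, D.φ (p1 x) = D'.φ (p2 x) := fun x => x.2
  have h1 : ∀ h, ∃ (M : ℕ) (x : K), M ≠ 0 ∧ p1 x = M • h := by
    intro h
    obtain ⟨M, h', hM, e⟩ := D'.mult (D.mem_W h)
    exact ⟨M, ⟨(M • h, h'), by rw [← map_nsmul] at e; exact e⟩, hM, rfl⟩
  have h2 : ∀ h, ∃ (M : ℕ) (x : K), M ≠ 0 ∧ p2 x = M • h := by
    intro h
    obtain ⟨M, h', hM, e⟩ := D.mult (D'.mem_W h)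
    exact ⟨M, ⟨(h', M • h), by rw [← map_nsmul] at e; exact e.symm⟩, hM, rfl⟩
  let D'' : QData d k W :=
    { H := K
      φ := D.φ.comp p1
      inj := by
        intro x y hxy
        have e1 : p1 x = p1 y := D.inj hxy
        have e2 : p2 x = p2 y := D'.inj (by rw [← hp, ← hp]; exact hxy)
        exact Subtype.ext (Prod.ext e1 e2)
      span := by
        apply le_antisymm
        · rw [Submodule.span_le]
          rintro _ ⟨x, rfl⟩
          exact D.mem_W _
        · conv_lhs => rw [← D.span]
          rw [Submodule.span_le]
          rintro _ ⟨h, rfl⟩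
          obtain ⟨M, x, hM, e⟩ := h1 h
          have : intVecQ (D.φ.comp p1 x) ∈
              Submodule.span ℚ (Set.range fun x => intVecQ (D.φ.comp p1 x)) :=
            Submodule.subset_span ⟨x, rfl⟩
          rw [AddMonoidHom.comp_apply, e, map_nsmul, intVecQ_nsmul,
            Submodule.smul_mem_iff _ (by exact_mod_cast hM)] at this
          exact this
      ι := D.ι ⊕ D'.ι
      f := Sum.elim (fun s x => D.f s (p1 x)) (fun s x => D'.f s (p2 x))
      g1 := by
        rintro (s | s)
        · exact g1_comp D.φ p1 h1 (D.f s) (D.g1 s)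
        · have := g1_comp D'.φ p2 h2 (D'.f s) (D'.g1 s)
          simp only [← hp] at this
          exact this
      g3 := by
        rintro (s | s) u
        · exact g3_comp p1 (D.f s) u (D.g3 s _)
        · exact g3_comp p2 (D'.f s) u (D'.g3 s _) }
  refine ⟨D'', ?_, ?_⟩
  · intro r hr g
    exact fspan_comp p1 D.f D''.f Sum.inl (fun _ _ => rfl) _ (hr g)
  · intro r hr g
    have := fspan_comp p2 D'.f D''.f Sum.inr (fun _ _ => rfl) _ (hr g)
    simp only [← hp] at this
    exact this

/-- trivial data -/
lemma QData.exists_triv (k : ℕ) (W : Submodule ℚ (Fin d → ℚ)) : Nonempty (QData d k W) := by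
  let iQ : (Fin d → ℤ) →+ (Fin d → ℚ) := ⟨⟨intVecQ, intVecQ_zero⟩, intVecQ_add⟩
  let L : AddSubgroup (Fin d → ℤ) := W.toAddSubgroup.comap iQ
  refine ⟨{ H := L, φ := L.subtype, inj := Subtype.val_injective, span := ?_, ι := Empty,
            f := fun s => s.elim, g1 := fun s => s.elim, g3 := fun s => s.elim }⟩
  apply le_antisymm
  · rw [Submodule.span_le]
    rintro _ ⟨x, rfl⟩
    exact x.2
  · intro q hq
    -- clear denominators
    have h1 : q ∈ Submodule.span ℚ (Set.range fun h : Fin d → ℤ => intVecQ (AddMonoidHom.id _ h)) := by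
      suffices (⊤ : Submodule ℚ (Fin d → ℚ)) ≤
        Submodule.span ℚ (Set.range fun h : Fin d → ℤ => intVecQ (AddMonoidHom.id _ h)) from
        this trivial
      rw [← (Pi.basisFun ℚ (Fin d)).span_eq]
      refine Submodule.span_mono ?_
      rintro _ ⟨i, rfl⟩
      refine ⟨Pi.single i 1, ?_⟩
      ext j
      by_cases hij : j = i
      · subst hij; simp [intVecQ]
      · simp [intVecQ, hij]
    obtain ⟨M, u, hM, e⟩ := span_mult (AddMonoidHom.id (Fin d → ℤ)) h1
    have hu : u ∈ L := by
      change intVecQ u ∈ W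
      rw [AddMonoidHom.id_apply] at e
      rw [← e]
      exact W.smul_mem _ hq
    rw [← Submodule.smul_mem_iff _ (show (M : ℚ) ≠ 0 by exact_mod_cast hM), e]
    exact Submodule.subset_span ⟨⟨u, hu⟩, rfl⟩

/-- The space of functions. -/
noncomputable def QQ (k : ℕ) (W : Submodule ℚ (Fin d → ℚ)) : Submodule ℝ ((Fin d → ℤ) → ℝ) where
  carrier := {r | ∃ D : QData d k W, r ∈ D.good}
  add_mem' := by
    rintro a b ⟨D, ha⟩ ⟨D', hb⟩
    obtain ⟨D'', h1, h2⟩ := D.merge D'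
    exact ⟨D'', D''.good.add_mem (h1 ha) (h2 hb)⟩
  zero_mem' := by
    obtain ⟨D⟩ := QData.exists_triv k W
    exact ⟨D, D.good.zero_mem⟩
  smul_mem' := by
    rintro a b ⟨D, ha⟩
    exact ⟨D, D.good.smul_mem a ha⟩

lemma mem_QQ {r : (Fin d → ℤ) → ℝ} : r ∈ QQ k W ↔ ∃ D : QData d k W, r ∈ D.good := Iff.rfl

lemma RPer.mem_QQ {r : (Fin d → ℤ) → ℝ} (hr : RPer k r) : ∃ W, r ∈ QQ k W := by
  obtain ⟨v, hv, hper⟩ := hr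
  let L : AddSubgroup (Fin d → ℤ) := AddSubgroup.closure (Set.range v)
  have hL : ∀ l ∈ L, ∀ x, r (x + l) = r x := by
    intro l hl
    induction hl using AddSubgroup.closure_induction with
    | mem l hl => obtain ⟨i, rfl⟩ := hl; exact hper i
    | zero => simp
    | add a b _ _ ha hb => intro x; rw [← add_assoc, hb, ha]
    | neg a _ ha => intro x; rw [← ha (x + -a), neg_add_cancel_right]
  refine ⟨Submodule.span ℚ (Set.range fun h : L => intVecQ (L.subtype h)),
    { H := L, φ := L.subtype, inj := Subtype.val_injective, span := rfl, ι := Unit,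
      f := fun _ _ => 1, g1 := ?_, g3 := ?_ }, ?_⟩
  · intro _
    exact ⟨fun i => ⟨v i, AddSubgroup.subset_closure ⟨i, rfl⟩⟩, hv, fun _ _ => rfl⟩
  · intro _ u
    exact Ideal.le_radical (mD_mem_annI.2 fun _ => rfl)
  · intro g
    have : (fun h : L => r (g + L.subtype h)) = r g • (fun h : L => (((1 : ℤ) : ℝ))) := by
      ext h
      simp [hL h.1 h.2 g]
    change (fun h : L => r (g + L.subtype h)) ∈ _
    rw [this]
    exact Submodule.smul_mem _ _ (Submodule.subset_span ⟨(), rfl⟩)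

end QDataSec
end PaperFormal

namespace PaperFormal

section QOps
variable {d k : ℕ} {W : Submodule ℚ (Fin d → ℚ)}

/-- functions killed by a polynomial, as a real subspace -/
noncomputable def killSub {H : Type*} [AddCommGroup H] (p : AddMonoidAlgebra ℤ H) :
    Submodule ℝ (H → ℝ) where
  carrier := {q | p ∈ annI q}
  add_mem' := by
    intro a b ha hb
    change act ℝ p a = 0 at ha
    change act ℝ p b = 0 at hb
    change act ℝ p (a + b) = 0
    rw [map_add, ha, hb, add_zero]
  zero_mem' := by
    change act ℝ p 0 = 0
    rw [map_zero]
  smul_mem' := by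
    intro c a ha
    change act ℝ p a = 0 at ha
    change act ℝ p (c • a) = 0
    rw [act_smul, ha, smul_zero]

lemma mem_killSub {H : Type*} [AddCommGroup H] {p : AddMonoidAlgebra ℤ H} {q : H → ℝ} :
    q ∈ killSub p ↔ p ∈ annI q := Iff.rfl

lemma annI_cast {H : Type*} [AddCommGroup H] (f : H → ℤ) :
    annI f ≤ annI (fun h => (f h : ℝ)) := by
  intro p hp
  rw [mem_annI] at *
  have := act_nat (Int.castAddHom ℝ) p f
  simp only [Int.coe_castAddHom] at this
  rw [this, hp]
  ext; simp

lemma annI_shift_map {H A B : Type*} [AddCommGroup H] [AddCommGroup A] [AddCommGroup B]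
    (f : H → A) (g : H) (φ : A →+ B) : annI f ≤ annI (fun h => φ (f (g + h))) := by
  intro p hp
  have h1 := annI_le_act (mX g) f hp
  have h2 : act A (mX g) f = fun h => f (g + h) := by
    ext h; simp [add_comm]
  rw [h2, mem_annI] at h1
  rw [mem_annI, act_nat, h1]
  ext; simp

lemma QData.kill (D : QData d k W) (u : D.H) :
    ∃ m : ℕ, ∀ q ∈ D.fspan, mD u ^ m ∈ annI q := by
  choose m hm using fun s => D.g3 s u
  refine ⟨∑ s, m s, fun q hq => ?_⟩
  have : D.fspan ≤ killSub (mD u ^ (∑ s, m s)) := by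
    rw [QData.fspan, Submodule.span_le]
    rintro _ ⟨s, rfl⟩
    refine annI_cast _ ?_
    exact Ideal.pow_mem_of_pow_mem _ (hm s) (Finset.single_le_sum (fun _ _ => Nat.zero_le _)
      (Finset.mem_univ s))
  exact this hq

lemma QData.rad (D : QData d k W) {r : (Fin d → ℤ) → ℝ} (hr : r ∈ D.good) (u : D.H) :
    mD (D.φ u) ∈ (annI r).radical := by
  obtain ⟨m, hm⟩ := D.kill u
  refine ⟨m, ?_⟩
  rw [← pushR_mD, ← map_pow, mem_annI_slices]
  exact fun g => hm _ (hr g)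

lemma QQ_rad {r : (Fin d → ℤ) → ℝ} (hr : r ∈ QQ k W) {u : Fin d → ℤ} (hu : intVecQ u ∈ W) :
    ∃ M : ℕ, M ≠ 0 ∧ mD (M • u) ∈ (annI r).radical := by
  obtain ⟨D, hD⟩ := hr
  obtain ⟨M, h, hM, e⟩ := D.mult hu
  exact ⟨M, hM, by rw [e]; exact D.rad hD h⟩

lemma QData.good_act (D : QData d k W) {r : (Fin d → ℤ) → ℝ} (hr : r ∈ D.good)
    (p : AddMonoidAlgebra ℤ (Fin d → ℤ)) : act ℝ p r ∈ D.good := by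
  induction p using AddMonoidAlgebra.induction_linear with
  | zero => simp
  | add p q hp hq =>
    rw [map_add]
    exact D.good.add_mem hp hq
  | single a b =>
    have : act ℝ (AddMonoidAlgebra.single a b) r = (b : ℝ) • fun x => r (x + a) := by
      ext x; simp
    rw [this]
    refine D.good.smul_mem _ fun g => ?_
    convert hr (g + a) using 3
    abel

/-- integer-valued real functions -/
def intVal (H : Type*) : AddSubgroup (H → ℝ) where
  carrier := {q | ∀ x, ∃ n : ℤ, q x = n}
  add_mem' := by
    intro a b ha hb x
    obtain ⟨n, hn⟩ := ha x
    obtain ⟨m, hm⟩ := hb x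
    exact ⟨n + m, by simp [hn, hm]⟩
  zero_mem' := fun x => ⟨0, by simp⟩
  neg_mem' := by
    intro a ha x
    obtain ⟨n, hn⟩ := ha x
    exact ⟨-n, by simp [hn]⟩

lemma QData.no_mult (D : QData d k W) {u : Fin d → ℤ} (hu : intVecQ u ∉ W) (M : ℤ) (h : D.H)
    (e : M • u = D.φ h) : M = 0 := by
  by_contra hM
  exact hu (mem_of_zsmul hM (by rw [e]; exact D.mem_W h))

lemma QQ_solve {u : Fin d → ℤ} (hu : intVecQ u ∉ W) {r : (Fin d → ℤ) → ℝ} (hr : r ∈ QQ k W) :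
    ∃ P ∈ QQ k W, act ℝ (mD u) P = r := by
  obtain ⟨D, hD⟩ := hr
  obtain ⟨P, hP, hP2⟩ := solve D.φ u (D.no_mult hu) D.fspan.toAddSubgroup r hD
  exact ⟨P, ⟨D, hP2⟩, hP⟩

lemma QQ_solve_int {u : Fin d → ℤ} (hu : intVecQ u ∉ W) {r : (Fin d → ℤ) → ℝ} (hr : r ∈ QQ k W)
    (hi : r ∈ intVal (Fin d → ℤ)) :
    ∃ P ∈ QQ k W, act ℝ (mD u) P = r ∧ P ∈ intVal (Fin d → ℤ) := by
  obtain ⟨D, hD⟩ := hr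
  obtain ⟨P, hP, hP2⟩ := solve D.φ u (D.no_mult hu) (D.fspan.toAddSubgroup ⊓ intVal D.H) r
    (fun g => ⟨hD g, fun h => hi _⟩)
  refine ⟨P, ⟨D, fun g => (hP2 g).1⟩, hP, fun x => ?_⟩
  have := (hP2 x).2 0
  simpa using this

/-- elements of `QQ` that are moreover unipotent in an extra direction -/
def NN (k : ℕ) (W : Submodule ℚ (Fin d → ℚ)) (u : Fin d → ℤ) (p : (Fin d → ℤ) → ℝ) : Prop :=
  p ∈ QQ k W ∧ ∃ a : ℤ, a ≠ 0 ∧ mD (a • u) ∈ (annI p).radical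

/-- the extended parametrization -/
noncomputable def extHom {H : Type*} [AddCommGroup H] (φ : H →+ (Fin d → ℤ)) (U : Fin d → ℤ) :
    H × ℤ →+ (Fin d → ℤ) := φ.coprod (zmultiplesHom _ U)

lemma extHom_apply {H : Type*} [AddCommGroup H] (φ : H →+ (Fin d → ℤ)) (U : Fin d → ℤ)
    (x : H × ℤ) : extHom φ U x = φ x.1 + x.2 • U := by
  simp [extHom]

lemma NN_solve_nonpar {t u : Fin d → ℤ} (hu : intVecQ u ∉ W ⊔ Submodule.span ℚ {intVecQ t})
    {p : (Fin d → ℤ) → ℝ} (hp : NN k W t p) :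
    ∃ P, NN k W t P ∧ act ℝ (mD u) P = p := by
  obtain ⟨⟨D, hD⟩, a, ha, n, hn⟩ := hp
  let E : AddSubgroup (D.H × ℤ → ℝ) :=
    { carrier := {q | (∀ j, (fun h => q (h, j)) ∈ D.fspan) ∧
        q ∈ killSub (mD ((0, 1) : D.H × ℤ) ^ n)}
      add_mem' := fun {x y} hx hy =>
        ⟨fun j => D.fspan.add_mem (hx.1 j) (hy.1 j), Submodule.add_mem _ hx.2 hy.2⟩
      zero_mem' := ⟨fun j => D.fspan.zero_mem, Submodule.zero_mem _⟩
      neg_mem' := fun {x} hx =>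
        ⟨fun j => D.fspan.neg_mem (hx.1 j), Submodule.neg_mem _ hx.2⟩ }
  have e1 : pushR (extHom D.φ (a • t)) (mD ((0, 1) : D.H × ℤ) ^ n) = mD (a • t) ^ n := by
    rw [map_pow, pushR_mD, extHom_apply]
    simp
  obtain ⟨P, hP, hP2⟩ := solve (extHom D.φ (a • t)) u (by
    intro M x e
    by_contra hM
    refine hu (mem_of_zsmul hM ?_)
    rw [e, extHom_apply, intVecQ_add, intVecQ_zsmul, intVecQ_zsmul, smul_smul]
    exact Submodule.add_mem_sup (D.mem_W _)
      (Submodule.smul_mem _ _ (Submodule.mem_span_singleton_self _))) E p (by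
    intro g
    refine ⟨fun j => ?_, ?_⟩
    · convert hD (g + j • (a • t)) using 3
      rw [extHom_apply]
      abel
    · rw [← e1] at hn
      exact (mem_annI_slices _ _ _).1 hn g)
  refine ⟨P, ⟨⟨D, fun g => ?_⟩, a, ha, n, ?_⟩, hP⟩
  · have := (hP2 g).1 0
    simpa [extHom_apply] using this
  · rw [← e1, mem_annI_slices]
    exact fun g => (hP2 g).2

lemma NN_solve_par {t u : Fin d → ℤ} (hu : intVecQ u ∈ W ⊔ Submodule.span ℚ {intVecQ t})
    (huW : intVecQ u ∉ W) {p : (Fin d → ℤ) → ℝ} (hp : NN k W t p) :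
    ∃ P, NN k W t P ∧ act ℝ (mD u) P = p := by
  obtain ⟨hpQ, a, ha, n, hn⟩ := hp
  obtain ⟨P, ⟨D, hD⟩, hP⟩ := QQ_solve huW hpQ
  refine ⟨P, ⟨⟨D, hD⟩, ?_⟩, hP⟩
  -- find the relation
  obtain ⟨M, x, hM, e⟩ : ∃ (M : ℕ) (x : D.H × ℤ), M ≠ 0 ∧ M • u = extHom D.φ (a • t) x := by
    have h1 : intVecQ u ∈
        Submodule.span ℚ (Set.range fun x => intVecQ (extHom D.φ (a • t) x)) := by
      refine (sup_le ?_ ?_ : W ⊔ Submodule.span ℚ {intVecQ t} ≤ _) hu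
      · refine D.span.symm.le.trans (Submodule.span_mono ?_)
        rintro _ ⟨h, rfl⟩
        exact ⟨(h, 0), by simp [extHom_apply]⟩
      · rw [Submodule.span_singleton_le_iff_mem,
          ← Submodule.smul_mem_iff _ (show (a : ℚ) ≠ 0 by exact_mod_cast ha), ← intVecQ_zsmul]
        exact Submodule.subset_span ⟨(0, 1), by simp [extHom_apply]⟩
    obtain ⟨M, x, hM, e⟩ := span_mult _ h1
    exact ⟨M, x, hM, intVecQ_inj (by rw [intVecQ_nsmul, e])⟩
  obtain ⟨h, b⟩ := x
  rw [extHom_apply] at e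
  simp only at e
  have hb : b ≠ 0 := by
    rintro rfl
    rw [zero_smul, add_zero] at e
    exact hM (by exact_mod_cast D.no_mult huW M h (by rw [← e]; simp))
  refine ⟨b * a, mul_ne_zero hb ha, ?_⟩
  have e2 : (b * a) • t = -D.φ h + M • u := by
    rw [e, mul_smul]
    abel
  have h1 : mD ((b * a) • t) ^ n * mD (M • u) ∈ annI P := by
    refine Ideal.mem_of_dvd _ (mul_dvd_mul (pow_dvd_pow_of_dvd ?_ n) (mD_dvd_nsmul M u) :
      mD (a • t) ^ n * mD u ∣ _) ?_
    · rw [mul_smul]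
      exact mD_dvd_zsmul _ _
    · rw [mem_annI, act_mul, hP]
      exact hn
  have h2 : mD (-D.φ h) ∈ (annI P).radical := by
    have := D.rad hD (-h)
    rwa [map_neg] at this
  have h3 : mD ((b * a) • t) ^ (n + 1) ∈ (annI P).radical := by
    have : mD ((b * a) • t) ^ (n + 1) = mX (-D.φ h) * (mD ((b * a) • t) ^ n * mD (M • u)) +
        mD ((b * a) • t) ^ n * mD (-D.φ h) := by
      have h4 := mD_add (-D.φ h) (M • u)
      rw [← e2] at h4
      rw [pow_succ]
      linear_combination (mD ((b * a) • t) ^ n) * h4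
    rw [this]
    exact Ideal.add_mem _ (Ideal.mul_mem_left _ _ (Ideal.le_radical h1))
      (Ideal.mul_mem_left _ _ h2)
  exact (Ideal.radical_isRadical _) (⟨_, h3⟩ : _ ∈ (annI P).radical.radical)

lemma NN_QQ {u : Fin d → ℤ} (hu : intVecQ u ∉ W) {p : (Fin d → ℤ) → ℝ} (hp : NN k W u p) :
    p ∈ QQ k (W ⊔ Submodule.span ℚ {intVecQ u}) := by
  obtain ⟨⟨D, hD⟩, a, ha, n, hn⟩ := hp
  have hinj : Function.Injective (extHom D.φ (a • u)) := by
    rw [injective_iff_map_eq_zero]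
    rintro ⟨h, j⟩ hx
    rw [extHom_apply] at hx
    simp only at hx
    have h1 := D.no_mult hu (j * a) (-h) (by
      rw [map_neg, mul_smul]
      exact (neg_eq_of_add_eq_zero_right hx).symm)
    have hj : j = 0 := by
      rcases mul_eq_zero.1 h1 with h | h
      · exact h
      · exact absurd h ha
    subst hj
    rw [zero_smul, add_zero] at hx
    rw [D.inj (hx.trans (map_zero D.φ).symm)]
    rfl
  let f' : D.ι × Fin n → D.H × ℤ → ℤ := fun s x => D.f s.1 x.1 * Ring.choose x.2 s.2.val
  refine ⟨{ H := D.H × ℤ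
            φ := extHom D.φ (a • u)
            inj := hinj
            span := ?_
            ι := D.ι × Fin n
            f := f'
            g1 := ?_
            g3 := ?_ }, ?_⟩
  · apply le_antisymm
    · rw [Submodule.span_le]
      rintro _ ⟨x, rfl⟩
      simp only [extHom_apply, intVecQ_add, intVecQ_zsmul, smul_smul]
      exact Submodule.add_mem_sup (D.mem_W _)
        (Submodule.smul_mem _ _ (Submodule.mem_span_singleton_self _))
    · refine sup_le ?_ ?_
      · refine D.span.symm.le.trans (Submodule.span_mono ?_)
        rintro _ ⟨h, rfl⟩
        exact ⟨(h, 0), by simp [extHom_apply]⟩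
      · rw [Submodule.span_singleton_le_iff_mem,
          ← Submodule.smul_mem_iff _ (show (a : ℚ) ≠ 0 by exact_mod_cast ha), ← intVecQ_zsmul]
        exact Submodule.subset_span ⟨(0, 1), by simp [extHom_apply]⟩
  · rintro ⟨s, b⟩
    obtain ⟨v, hv, hf⟩ := D.g1 s
    refine ⟨fun i => (v i, 0), ?_, ?_⟩
    · simpa [extHom_apply] using hv
    · intro i h
      simp [f', hf]
  · rintro ⟨s, b⟩ ⟨h, j⟩
    have e : ((h, j) : D.H × ℤ) = (h, 0) + j • (0, 1) := by simp
    rw [e]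
    refine mD_add_rad ?_ (mD_zsmul_mem _ ?_)
    · obtain ⟨m, hm⟩ := D.g3 s h
      refine ⟨m, ?_⟩
      have : pushR (AddMonoidHom.inl D.H ℤ) (mD h ^ m) = mD ((h, 0) : D.H × ℤ) ^ m := by
        rw [map_pow, pushR_mD]; rfl
      rw [← this, mem_annI_slices]
      rintro ⟨h0, j0⟩
      have := annI_shift_map (D.f s) h0 (AddMonoidHom.mulRight (Ring.choose j0 b.val)) hm
      simpa [f'] using this
    · refine ⟨b.val + 1, ?_⟩
      have : pushR (AddMonoidHom.inr D.H ℤ) (mD (1 : ℤ) ^ (b.val + 1)) =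
          mD ((0, 1) : D.H × ℤ) ^ (b.val + 1) := by
        rw [map_pow, pushR_mD]; rfl
      rw [← this, mem_annI_slices]
      rintro ⟨h0, j0⟩
      have := annI_shift_map _ j0 (AddMonoidHom.mulLeft (D.f s h0)) (choose_ann b.val)
      simpa [f'] using this
  · intro g
    change (fun x : D.H × ℤ => p (g + extHom D.φ (a • u) x)) ∈
      Submodule.span ℝ (Set.range fun s x => (f' s x : ℝ))
    have hN : (fun x : D.H × ℤ => p (g + extHom D.φ (a • u) x)) =
        ∑ b : Fin n, fun x : D.H × ℤ => act ℝ (mD (a • u) ^ b.val) p (g + D.φ x.1) *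
          (Ring.choose x.2 b.val : ℤ) := by
      ext ⟨h, j⟩
      rw [Finset.sum_apply, extHom_apply]
      have h1 := newton n (fun j : ℤ => p ((g + D.φ h) + zmultiplesHom _ (a • u) j)) (by
        refine (mem_annI_slices (zmultiplesHom _ (a • u)) (mD 1 ^ n) p).1 ?_ _
        rw [map_pow, pushR_mD]
        simpa using hn) j
      rw [Finset.sum_range] at h1
      have h2 : ∀ b : ℕ, act ℝ (mD (1 : ℤ) ^ b)
          (fun j : ℤ => p ((g + D.φ h) + zmultiplesHom _ (a • u) j)) 0 =
          act ℝ (mD (a • u) ^ b) p (g + D.φ h) := by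
        intro b
        have h3 := act_comp (zmultiplesHom _ (a • u)) (mD (1 : ℤ) ^ b) p (g + D.φ h) 0
        rw [h3, map_pow (pushR _), pushR_mD, map_zero, add_zero, zmultiplesHom_apply, one_smul]
      simp only [h2] at h1
      rw [zmultiplesHom_apply] at h1
      rw [← add_assoc, h1]
      exact Finset.sum_congr rfl fun b _ => by rw [zsmul_eq_mul, mul_comm]
    rw [hN]
    refine Submodule.sum_mem _ fun b _ => ?_
    have hb := D.good_act hD (mD (a • u) ^ b.val) g
    let T : (D.H → ℝ) →ₗ[ℝ] (D.H × ℤ → ℝ) :=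
      { toFun := fun q x => q x.1 * (Ring.choose x.2 b.val : ℤ)
        map_add' := by intro q q'; ext x; simp [add_mul]
        map_smul' := by intro c q; ext x; simp [mul_assoc] }
    have hT : D.fspan ≤ (Submodule.span ℝ (Set.range fun s x => (f' s x : ℝ))).comap T := by
      rw [QData.fspan, Submodule.span_le]
      rintro _ ⟨s, rfl⟩
      refine Submodule.subset_span ⟨(s, b), ?_⟩
      ext x
      simp [T, f']
    exact hT hb

end QOps
end PaperFormal

namespace PaperFormal

section Integral

lemma uniform_denom {ι : Type*} [Fintype ι] (M : Submodule ℤ (ι → ℤ)) :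
    ∃ D : ℕ, D ≠ 0 ∧ ∀ a : ι → ℝ, (∀ x ∈ M, ∃ n : ℤ, ∑ s, a s * x s = n) →
      ∃ n : ι → ℤ, ∀ x ∈ M, (D : ℝ) * ∑ s, a s * x s = ∑ s, (n s : ℝ) * x s := by
  classical
  obtain ⟨m, S⟩ := Submodule.smithNormalForm (Pi.basisFun ℤ ι) M
  have ha0 : ∀ i, S.a i ≠ 0 := by
    intro i h0
    have h1 := S.snf i
    rw [h0, zero_smul] at h1
    exact S.bN.ne_zero i (Subtype.ext h1)
  refine ⟨∏ i, (S.a i).natAbs, Finset.prod_ne_zero_iff.2 fun i _ => Int.natAbs_ne_zero.2 (ha0 i), ?_⟩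
  set D : ℕ := ∏ i, (S.a i).natAbs with hD
  have hdvd : ∀ i, S.a i ∣ (D : ℤ) := by
    intro i
    rw [Int.dvd_natCast]
    exact Finset.dvd_prod_of_mem _ (Finset.mem_univ i)
  choose e he using hdvd
  intro a hin
  choose z hz using fun i => hin (S.bN i) (S.bN i).2
  let L : (ι → ℤ) →ₗ[ℤ] ℤ := S.bM.constr ℤ
    (fun t => if h : ∃ i, S.f i = t then e h.choose * z h.choose else 0)
  have hL : ∀ i, L (S.bM (S.f i)) = e i * z i := by
    intro i
    simp only [L, Module.Basis.constr_basis]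
    have h : ∃ j, S.f j = S.f i := ⟨i, rfl⟩
    rw [dif_pos h, S.f.injective h.choose_spec]
  let A : (ι → ℤ) →+ ℝ :=
    { toFun := fun x => (D : ℝ) * ∑ s, a s * x s
      map_zero' := by simp
      map_add' := by
        intro x y
        simp [mul_add, Finset.sum_add_distrib] }
  have key : A.toIntLinearMap.comp M.subtype =
      ((Int.castAddHom ℝ).toIntLinearMap.comp L).comp M.subtype := by
    refine S.bN.ext fun i => ?_
    have h1 : L (S.bN i) = D * z i := by
      rw [S.snf, map_smul, hL, he i, smul_eq_mul]
      ring
    simp only [LinearMap.comp_apply, Submodule.subtype_apply, h1]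
    simp [A, hz i]
  refine ⟨fun s => L (Pi.single s 1), fun x hx => ?_⟩
  have h2 := LinearMap.congr_fun key ⟨x, hx⟩
  have h3 : (D : ℝ) * ∑ s, a s * x s = (L x : ℝ) := h2
  rw [h3, LinearMap.pi_apply_eq_sum_univ L x]
  push_cast
  refine Finset.sum_congr rfl fun s _ => ?_
  rw [smul_eq_mul, Int.cast_mul, mul_comm]
  congr 3
  ext j
  simp [Pi.single_apply, eq_comm]

lemma pow_sub_one_dvd {S : Type*} [CommRing S] (D : ℕ) (hD : (D : S) = 0) (z : S) (t : ℕ) :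
    (z - 1) ^ (t + 1) ∣ z ^ (D ^ t) - 1 := by
  induction t with
  | zero => simp
  | succ t ih =>
    have h1 : z ^ D ^ (t + 1) - 1 =
        (∑ i ∈ Finset.range D, (z ^ D ^ t) ^ i) * (z ^ D ^ t - 1) := by
      rw [geom_sum_mul, ← pow_mul, ← pow_succ]
    have h2 : z - 1 ∣ ∑ i ∈ Finset.range D, (z ^ D ^ t) ^ i := by
      have : ∑ i ∈ Finset.range D, (z ^ D ^ t) ^ i =
          ∑ i ∈ Finset.range D, ((z ^ D ^ t) ^ i - 1) + D := by
        rw [Finset.sum_sub_distrib]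
        simp
      rw [this, hD, add_zero]
      refine Finset.dvd_sum fun i _ => ?_
      rw [← pow_mul]
      exact sub_one_dvd_pow_sub_one _ _
    rw [h1, pow_succ', ]
    exact mul_dvd_mul h2 ih

lemma mod_period {H : Type*} [AddCommGroup H] (f : H → ℤ) (v : H)
    (hv : mD v ∈ (annI f).radical) (D : ℕ) (hD : D ≠ 0) :
    ∃ K : ℕ, K ≠ 0 ∧ ∀ h, (f (h + K • v) : ZMod D) = f h := by
  obtain ⟨m, hm⟩ := hv
  set I := annI (fun h => (f h : ZMod D)) with hI
  have h1 : mD v ^ m ∈ I := by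
    have := annI_shift_map f 0 (Int.castAddHom (ZMod D)) hm
    simpa using this
  have h2 : (D : AddMonoidAlgebra ℤ H) ∈ I := by
    rw [hI, mem_annI]
    ext h
    simp
  refine ⟨D ^ m, pow_ne_zero _ hD, ?_⟩
  have h3 : mD (D ^ m • v) ∈ I := by
    rw [← Ideal.Quotient.eq_zero_iff_mem] at h1 h2 ⊢
    have h4 := pow_sub_one_dvd D (by simpa using h2) (Ideal.Quotient.mk I (mX v)) m
    rw [mD, map_sub, mX_nsmul, map_pow, map_one]
    rw [mD, map_pow, map_sub, map_one] at h1
    rw [pow_succ, h1, zero_mul] at h4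
    exact zero_dvd_iff.1 h4
  exact mD_mem_annI.1 h3

/-- finite sums of integer `k`-periodic functions -/
def SP (d k : ℕ) : AddSubgroup ((Fin d → ℤ) → ℤ) := AddSubgroup.closure {c | KPeriodic k c}

variable {d k : ℕ} {W : Submodule ℚ (Fin d → ℚ)}

lemma int_QQ_SP (R : (Fin d → ℤ) → ℤ) (hR : (fun x => (R x : ℝ)) ∈ QQ k W) : R ∈ SP d k := by
  obtain ⟨Q, hQ⟩ := hR
  obtain ⟨D, hD, hDa⟩ := uniform_denom
    (Submodule.span ℤ (Set.range fun (h : Q.H) (s : Q.ι) => Q.f s h))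
  have hn : ∀ g, ∃ n : Q.ι → ℤ, ∀ h, (D : ℤ) * R (g + Q.φ h) = ∑ s, n s * Q.f s h := by
    intro g
    have h1 := hQ g
    rw [QData.fspan, Submodule.mem_span_range_iff_exists_fun] at h1
    obtain ⟨a, ha⟩ := h1
    have ha' : ∀ h, ∑ s, a s * (Q.f s h : ℝ) = R (g + Q.φ h) := by
      intro h
      have := congrFun ha h
      simpa [Finset.sum_apply] using this
    obtain ⟨n, hn⟩ := hDa a (by
      intro x hx
      induction hx using Submodule.span_induction with
      | mem x hx =>
        obtain ⟨h, rfl⟩ := hx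
        exact ⟨_, ha' h⟩
      | zero => exact ⟨0, by simp⟩
      | add x y _ _ hx hy =>
        obtain ⟨n, hn⟩ := hx
        obtain ⟨m, hm⟩ := hy
        exact ⟨n + m, by simp [mul_add, Finset.sum_add_distrib, hn, hm]⟩
      | smul b x _ hx =>
        obtain ⟨n, hn⟩ := hx
        refine ⟨b * n, ?_⟩
        push_cast
        rw [← hn, Finset.mul_sum]
        refine Finset.sum_congr rfl fun s _ => ?_
        simp
        ring)
    refine ⟨n, fun h => ?_⟩
    have h2 := hn _ (Submodule.subset_span ⟨h, rfl⟩)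
    rw [ha'] at h2
    exact_mod_cast h2
  choose n hn using hn
  have hdec : ∀ x : Fin d → ℤ, ∃ h : Q.H,
      x = (Quotient.out (x : (Fin d → ℤ) ⧸ Q.φ.range) : Fin d → ℤ) + Q.φ h := by
    intro x
    have h1 : -(Quotient.out (x : (Fin d → ℤ) ⧸ Q.φ.range) : Fin d → ℤ) + x ∈ Q.φ.range := by
      rw [← QuotientAddGroup.eq]
      exact Quotient.out_eq _
    obtain ⟨h, hh⟩ := h1
    exact ⟨h, by rw [hh]; abel⟩
  choose η hη using hdec
  set σ : (Fin d → ℤ) → (Fin d → ℤ) :=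
    fun x => Quotient.out (x : (Fin d → ℤ) ⧸ Q.φ.range) with hσ
  have hσ1 : ∀ x h, σ (x + Q.φ h) = σ x := by
    intro x h
    simp only [hσ]
    congr 1
    rw [QuotientAddGroup.eq]
    exact ⟨-h, by rw [map_neg]; abel⟩
  have hη1 : ∀ x h, η (x + Q.φ h) = η x + h := by
    intro x h
    apply Q.inj
    have h1 : x + Q.φ h = σ (x + Q.φ h) + Q.φ (η (x + Q.φ h)) := hη _
    have h2 : x = σ x + Q.φ (η x) := hη x
    rw [hσ1] at h1
    rw [map_add]
    linear_combination h2 - h1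
  set T : Q.ι → (Fin d → ℤ) → ℤ := fun s x => n (σ x) s * Q.f s (η x) with hT
  have hT1 : ∀ x, ∑ s, T s x = D * R x := by
    intro x
    rw [hη x]
    simp only [hT]
    change _ = (D : ℤ) * R (σ x + Q.φ (η x))
    rw [hn]
    have h2 : σ x + Q.φ (η x) = x := (hη x).symm
    change ∑ s, n (σ (σ x + Q.φ (η x))) s * Q.f s (η (σ x + Q.φ (η x))) = _
    rw [h2]
  have hDz : (D : ℤ) ≠ 0 := by exact_mod_cast hD
  have hT2 : R = ∑ s, (fun x => T s x / D) + fun x => (∑ s, T s x % D) / D := by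
    ext x
    rw [Pi.add_apply, Finset.sum_apply]
    have h1 : ∑ s, T s x % D = D * (R x - ∑ s, T s x / D) := by
      rw [mul_sub, ← hT1, Finset.mul_sum, ← Finset.sum_sub_distrib]
      refine Finset.sum_congr rfl fun s _ => ?_
      rw [Int.emod_def]
    rw [h1, Int.mul_ediv_cancel_left _ hDz]
    ring
  have hT3 : ∀ s x h, T s (x + Q.φ h) = n (σ x) s * Q.f s (η x + h) := by
    intro s x h
    simp only [hT, hσ1, hη1]
  by_cases hne : Nonempty Q.ι
  · rw [hT2]
    refine AddSubgroup.add_mem _ (AddSubgroup.sum_mem _ fun s _ => AddSubgroup.subset_closure ?_)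
      (AddSubgroup.subset_closure ?_)
    · obtain ⟨v, hv, hf⟩ := Q.g1 s
      refine ⟨fun i => Q.φ (v i), hv, fun i x => ?_⟩
      simp only [hT, hσ1, hη1, hf]
    · obtain ⟨s0⟩ := hne
      obtain ⟨v, hv, -⟩ := Q.g1 s0
      have hK : ∀ i, ∃ K : ℕ, K ≠ 0 ∧ ∀ s h, (Q.f s (h + K • v i) : ZMod D) = Q.f s h := by
        intro i
        choose K hK hK2 using fun s => mod_period (Q.f s) (v i) (Q.g3 s _) D hD
        refine ⟨∏ s, K s, Finset.prod_ne_zero_iff.2 fun s _ => hK s, fun s h => ?_⟩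
        obtain ⟨q, hq⟩ := Finset.dvd_prod_of_mem K (Finset.mem_univ s)
        rw [hq, mul_comm, mul_smul]
        exact per_nsmul (c := fun h => (Q.f s h : ZMod D)) (hK2 s) q h
      choose K hK hK2 using hK
      refine ⟨fun i => K i • Q.φ (v i), linInd_scale _ K hK hv, fun i x => ?_⟩
      simp only
      congr 1
      refine Finset.sum_congr rfl fun s _ => ?_
      rw [← map_nsmul, hT3]
      simp only [hT]
      rw [← ZMod.intCast_eq_intCast_iff']
      push_cast
      rw [hK2]
  · rw [not_nonempty_iff] at hne
    have : R = 0 := by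
      ext x
      have h1 := hT1 x
      rw [Finset.univ_eq_empty, Finset.sum_empty] at h1
      rcases mul_eq_zero.1 h1.symm with h | h
      · exact absurd h hDz
      · exact h
    rw [this]
    exact AddSubgroup.zero_mem _

end Integral
end PaperFormal

namespace PaperFormal
section Final
variable {d k : ℕ} {W : Submodule ℚ (Fin d → ℚ)}

lemma QQ_act {r : (Fin d → ℤ) → ℝ} (hr : r ∈ QQ k W) (p : AddMonoidAlgebra ℤ (Fin d → ℤ)) :
    act ℝ p r ∈ QQ k W := by
  obtain ⟨D, hD⟩ := hr
  exact ⟨D, D.good_act hD p⟩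

/-- generators for the splitting of an element of `QQ k W` -/
def TT (k : ℕ) (W : Submodule ℚ (Fin d → ℚ)) (us : List (Fin d → ℤ)) :
    Set ((Fin d → ℤ) → ℝ) :=
  {S | S ∈ QQ k W ∧ S ∈ intVal (Fin d → ℤ)} ∪ {p | ∃ t ∈ us, NN k W t p}

lemma TT_le (us : List (Fin d → ℤ)) :
    AddSubgroup.closure (TT k W us) ≤ (QQ k W).toAddSubgroup := by
  rw [AddSubgroup.closure_le]
  rintro x (hx | ⟨t, -, hx⟩)
  · exact hx.1
  · exact hx.1

lemma TT_solve (us : List (Fin d → ℤ)) {u : Fin d → ℤ} (hu : intVecQ u ∉ W)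
    {q : (Fin d → ℤ) → ℝ} (hq : q ∈ AddSubgroup.closure (TT k W us)) :
    ∃ P ∈ AddSubgroup.closure (TT k W us), act ℝ (mD u) P = q := by
  induction hq using AddSubgroup.closure_induction with
  | mem x hx =>
    rcases hx with hx | ⟨t, ht, hx⟩
    · obtain ⟨P, h1, h2, h3⟩ := QQ_solve_int hu hx.1 hx.2
      exact ⟨P, AddSubgroup.subset_closure (Or.inl ⟨h1, h3⟩), h2⟩
    · by_cases h : intVecQ u ∈ W ⊔ Submodule.span ℚ {intVecQ t}
      · obtain ⟨P, h1, h2⟩ := NN_solve_par h hu hx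
        exact ⟨P, AddSubgroup.subset_closure (Or.inr ⟨t, ht, h1⟩), h2⟩
      · obtain ⟨P, h1, h2⟩ := NN_solve_nonpar h hx
        exact ⟨P, AddSubgroup.subset_closure (Or.inr ⟨t, ht, h1⟩), h2⟩
  | zero => exact ⟨0, AddSubgroup.zero_mem _, map_zero _⟩
  | add x y _ _ hx hy =>
    obtain ⟨P, h1, h2⟩ := hx
    obtain ⟨Q, h3, h4⟩ := hy
    exact ⟨P + Q, AddSubgroup.add_mem _ h1 h3, by rw [map_add, h2, h4]⟩
  | neg x _ hx =>
    obtain ⟨P, h1, h2⟩ := hx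
    exact ⟨-P, AddSubgroup.neg_mem _ h1, by rw [map_neg, h2]⟩

lemma TT_mono (us : List (Fin d → ℤ)) (u : Fin d → ℤ) :
    AddSubgroup.closure (TT k W us) ≤ AddSubgroup.closure (TT k W (u :: us)) := by
  apply AddSubgroup.closure_mono
  rintro x (hx | ⟨t, ht, hx⟩)
  · exact Or.inl hx
  · exact Or.inr ⟨t, List.mem_cons_of_mem _ ht, hx⟩

lemma split_QQ (us : List (Fin d → ℤ)) (hus : ∀ u ∈ us, intVecQ u ∉ W) :
    ∀ r ∈ QQ k W, act ℝ ((us.map mD).prod) r ∈ intVal (Fin d → ℤ) →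
      r ∈ AddSubgroup.closure (TT k W us) := by
  induction us with
  | nil =>
    intro r hr hi
    refine AddSubgroup.subset_closure (Or.inl ⟨hr, ?_⟩)
    simpa using hi
  | cons u us ih =>
    intro r hr hi
    have h1 : act ℝ (mD u) r ∈ AddSubgroup.closure (TT k W us) := by
      refine ih (fun v hv => hus v (List.mem_cons_of_mem _ hv)) _ (QQ_act hr _) ?_
      rw [List.map_cons, List.prod_cons, mul_comm, act_mul] at hi
      exact hi
    obtain ⟨P, hP1, hP2⟩ := TT_solve us (hus u List.mem_cons_self) h1
    have h2 : r = P + (r - P) := by abel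
    rw [h2]
    refine AddSubgroup.add_mem _ (TT_mono us u hP1)
      (AddSubgroup.subset_closure (Or.inr ⟨u, List.mem_cons_self, ?_, 1, one_ne_zero, ?_⟩))
    · exact (QQ k W).sub_mem hr (TT_le us hP1)
    · apply Ideal.le_radical
      rw [one_smul, mem_annI, map_sub, hP2, sub_self]

lemma exists_int_vec {W' : Submodule ℚ (Fin d → ℚ)} (h : ¬ W' ≤ W) :
    ∃ u : Fin d → ℤ, intVecQ u ∈ W' ∧ intVecQ u ∉ W := by
  obtain ⟨q, hq, hqW⟩ := SetLike.not_le_iff_exists.1 h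
  obtain ⟨b, hb⟩ := IsLocalization.exist_integer_multiples_of_finset (nonZeroDivisors ℤ)
    (Finset.univ.image q)
  have hb0 : ((b : ℤ) : ℚ) ≠ 0 := by exact_mod_cast nonZeroDivisors.coe_ne_zero b
  choose u hu using fun i => hb (q i) (Finset.mem_image_of_mem _ (Finset.mem_univ i))
  have e : intVecQ u = ((b : ℤ) : ℚ) • q := by
    ext i
    have := hu i
    simpa [intVecQ] using this
  refine ⟨u, by rw [e]; exact W'.smul_mem _ hq, fun h => hqW ?_⟩
  rw [e] at h
  exact (W.smul_mem_iff hb0).1 h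

lemma exists_kill (F : Finset (Submodule ℚ (Fin d → ℚ))) (hF : ∀ W' ∈ F, ¬ W' ≤ W) :
    ∀ s ∈ ⨆ W' ∈ F, QQ k W', ∃ us : List (Fin d → ℤ), (∀ u ∈ us, intVecQ u ∉ W) ∧
      (us.map mD).prod ∈ annI s := by
  classical
  induction F using Finset.induction_on with
  | empty =>
    intro s hs
    have : s = 0 := by simpa using hs
    refine ⟨[], by simp, ?_⟩
    rw [mem_annI, this, map_zero]
  | insert W' F _ ih =>
    intro s hs
    rw [Finset.iSup_insert, Submodule.mem_sup] at hs
    obtain ⟨a, ha, b, hb, rfl⟩ := hs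
    obtain ⟨us, h1, h2⟩ := ih (fun V hV => hF V (Finset.mem_insert_of_mem hV)) b hb
    obtain ⟨u, hu1, hu2⟩ := exists_int_vec (hF W' (Finset.mem_insert_self _ _))
    obtain ⟨M, hM, m, hm⟩ := QQ_rad ha hu1
    refine ⟨us ++ List.replicate m (M • u), ?_, ?_⟩
    · intro v hv
      rcases List.mem_append.1 hv with hv | hv
      · exact h1 v hv
      · rw [List.eq_of_mem_replicate hv, intVecQ_nsmul]
        intro h
        exact hu2 ((W.smul_mem_iff (by exact_mod_cast hM)).1 h)
    · rw [List.map_append, List.prod_append, List.map_replicate, List.prod_replicate]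
      have e1 := (annI a).mul_mem_left (us.map mD).prod hm
      have e2 := (annI b).mul_mem_right (mD (M • u) ^ m) h2
      rw [mem_annI] at e1 e2 ⊢
      rw [map_add, e1, e2, add_zero]

lemma closure_split (us : List (Fin d → ℤ)) (hus : ∀ u ∈ us, intVecQ u ∉ W)
    {r : (Fin d → ℤ) → ℝ} (hr : r ∈ AddSubgroup.closure (TT k W us))
    (X : Submodule ℝ ((Fin d → ℤ) → ℝ))
    (hX : ∀ u ∈ us, QQ k (W ⊔ Submodule.span ℚ {intVecQ u}) ≤ X) :
    ∃ S ∈ SP d k, r - (fun x => (S x : ℝ)) ∈ X := by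
  induction hr using AddSubgroup.closure_induction with
  | mem x hx =>
    rcases hx with ⟨h1, h2⟩ | ⟨t, ht, hx⟩
    · choose n hn using h2
      have e : x = fun y => (n y : ℝ) := funext hn
      refine ⟨n, int_QQ_SP (W := W) n (by rw [← e]; exact h1), ?_⟩
      rw [← e, sub_self]
      exact X.zero_mem
    · refine ⟨0, AddSubgroup.zero_mem _, ?_⟩
      have e : x - (fun y => (((0 : (Fin d → ℤ) → ℤ) y : ℤ) : ℝ)) = x := by
        ext y; simp
      rw [e]
      exact hX t ht (NN_QQ (hus t ht) hx)
  | zero =>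
    refine ⟨0, AddSubgroup.zero_mem _, ?_⟩
    convert X.zero_mem using 1
    ext y; simp
  | add x y _ _ hx hy =>
    obtain ⟨S, h1, h2⟩ := hx
    obtain ⟨T, h3, h4⟩ := hy
    refine ⟨S + T, AddSubgroup.add_mem _ h1 h3, ?_⟩
    convert X.add_mem h2 h4 using 1
    ext z
    simp
    ring
  | neg x _ hx =>
    obtain ⟨S, h1, h2⟩ := hx
    refine ⟨-S, AddSubgroup.neg_mem _ h1, ?_⟩
    convert X.neg_mem h2 using 1
    ext z
    simp
    ring

lemma intVal_act {c : (Fin d → ℤ) → ℤ} (p : AddMonoidAlgebra ℤ (Fin d → ℤ)) :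
    act ℝ p (fun x => (c x : ℝ)) ∈ intVal (Fin d → ℤ) := by
  have := act_nat (Int.castAddHom ℝ) p c
  intro x
  refine ⟨act ℤ p c x, ?_⟩
  have h2 := congrFun this x
  simpa using h2

lemma QQ_sup_SP (t : ℕ) : ∀ (j : ℕ) (F : Finset (Submodule ℚ (Fin d → ℚ))),
    (∀ W ∈ F, d + 1 ≤ Module.finrank ℚ W + t) →
    (F.filter (fun W : Submodule ℚ (Fin d → ℚ) => Module.finrank ℚ W + t = d + 1)).card = j →
    ∀ c : (Fin d → ℤ) → ℤ, (fun x => (c x : ℝ)) ∈ ⨆ W ∈ F, QQ k W → c ∈ SP d k := by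
  classical
  induction t with
  | zero =>
    intro j F hF _ c hc
    have : F = ∅ := by
      rw [Finset.eq_empty_iff_forall_notMem]
      intro W hW
      have h1 := hF W hW
      have h2 := W.finrank_le
      rw [Module.finrank_fin_fun] at h2
      omega
    subst this
    have h0 : (fun x => (c x : ℝ)) = 0 := by simpa using hc
    have : c = 0 := by
      ext x
      have := congrFun h0 x
      simpa using this
    rw [this]
    exact AddSubgroup.zero_mem _
  | succ t iht =>
    intro j
    induction j with
    | zero =>
      intro F hF hj c hc
      refine iht _ F ?_ rfl c hc
      intro W hW
      have h1 := hF W hW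
      rw [Finset.card_eq_zero, Finset.filter_eq_empty_iff] at hj
      have := hj hW
      omega
    | succ j ihj =>
      intro F hF hj c hc
      obtain ⟨W, hW⟩ : (F.filter (fun W : Submodule ℚ (Fin d → ℚ) => Module.finrank ℚ W + (t + 1) = d + 1)).Nonempty := by
        rw [← Finset.card_pos]; omega
      have hW0 := hW
      rw [Finset.mem_filter] at hW
      obtain ⟨hWF, hWt⟩ := hW
      have hc0 := hc
      rw [← Finset.insert_erase hWF, Finset.iSup_insert, Submodule.mem_sup] at hc
      obtain ⟨a, ha, b, hb, hab⟩ := hc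
      obtain ⟨us, hus, hk⟩ := exists_kill (W := W) (F.erase W) (by
        intro W' hW' hle
        rw [Finset.mem_erase] at hW'
        have h1 := hF W' hW'.2
        refine hW'.1 (Submodule.eq_of_le_of_finrank_le hle (by omega))) b hb
      have hsp := split_QQ us hus a ha (by
        rw [mem_annI] at hk
        have := intVal_act (c := c) (us.map mD).prod
        rw [← hab, map_add, hk, add_zero] at this
        exact this)
      set F' := F.erase W ∪ us.toFinset.image (fun u => W ⊔ Submodule.span ℚ {intVecQ u}) with hF'
      obtain ⟨S, hS, hS2⟩ := closure_split us hus hsp (⨆ W ∈ F', QQ k W) (by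
        intro u hu
        refine le_iSup₂_of_le (W ⊔ Submodule.span ℚ {intVecQ u}) ?_ le_rfl
        rw [hF', Finset.mem_union]
        right
        exact Finset.mem_image_of_mem _ (List.mem_toFinset.2 hu))
      have hdim : ∀ V ∈ us.toFinset.image (fun u => W ⊔ Submodule.span ℚ {intVecQ u}),
          Module.finrank ℚ V + (t + 1) = d + 1 + 1 := by
        intro V hV
        obtain ⟨u, hu, rfl⟩ := Finset.mem_image.1 hV
        have := Submodule.finrank_sup_span_singleton (hus u (List.mem_toFinset.1 hu))
        omega
      have hmem : c - S ∈ SP d k := by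
        refine ihj F' ?_ ?_ (c - S) ?_
        · intro V hV
          rcases Finset.mem_union.1 hV with hV | hV
          · exact hF V (Finset.mem_of_mem_erase hV)
          · have := hdim V hV
            omega
        · have e : F'.filter (fun W : Submodule ℚ (Fin d → ℚ) => Module.finrank ℚ W + (t + 1) = d + 1) =
              (F.filter (fun W : Submodule ℚ (Fin d → ℚ) => Module.finrank ℚ W + (t + 1) = d + 1)).erase W := by
            ext V
            rw [Finset.mem_filter, Finset.mem_erase, Finset.mem_filter, hF', Finset.mem_union,
              Finset.mem_erase]
            constructor
            · rintro ⟨h1 | h1, h2⟩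
              · exact ⟨h1.1, h1.2, h2⟩
              · have := hdim V h1
                omega
            · rintro ⟨h1, h2, h3⟩
              exact ⟨Or.inl ⟨h1, h2⟩, h3⟩
          rw [e, Finset.card_erase_of_mem hW0, hj]
          rfl
        · have hb' : b ∈ ⨆ W ∈ F', QQ k W := by
            have hle : ⨆ V ∈ F.erase W, QQ k V ≤ ⨆ V ∈ F', QQ k V := by
              refine biSup_mono fun V hV => ?_
              exact Finset.mem_union_left _ hV
            exact hle hb
          convert Submodule.add_mem _ hS2 hb' using 1
          ext x
          have := congrFun hab x
          simp only [Pi.add_apply, Pi.sub_apply] at this ⊢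
          push_cast
          rw [← this]
          ring
      have : c = (c - S) + S := by abel
      rw [this]
      exact AddSubgroup.add_mem _ hmem hS

lemma span_RPer {r : (Fin d → ℤ) → ℝ} (hr : r ∈ Submodule.span ℝ {r | RPer k r}) :
    ∃ F : Finset (Submodule ℚ (Fin d → ℚ)), r ∈ ⨆ W ∈ F, QQ k W := by
  classical
  induction hr using Submodule.span_induction with
  | mem x hx =>
    obtain ⟨W, hW⟩ := RPer.mem_QQ hx
    exact ⟨{W}, by simpa using hW⟩
  | zero => exact ⟨∅, Submodule.zero_mem _⟩
  | add x y _ _ hx hy =>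
    obtain ⟨F, hF⟩ := hx
    obtain ⟨F', hF'⟩ := hy
    refine ⟨F ∪ F', ?_⟩
    rw [Finset.iSup_union]
    exact Submodule.add_mem_sup hF hF'
  | smul a x _ hx =>
    obtain ⟨F, hF⟩ := hx
    exact ⟨F, Submodule.smul_mem _ _ hF⟩

lemma SP_sum {c : (Fin d → ℤ) → ℤ} (hc : c ∈ SP d k) :
    ∃ (m : ℕ) (cs : Fin m → ((Fin d → ℤ) → ℤ)), (∀ i, KPeriodic k (cs i)) ∧ c = ∑ i, cs i := by
  induction hc using AddSubgroup.closure_induction with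
  | mem x hx => exact ⟨1, fun _ => x, fun _ => hx, by simp⟩
  | zero => exact ⟨0, Fin.elim0, fun i => i.elim0, by simp⟩
  | add x y _ _ hx hy =>
    obtain ⟨m, cs, h1, rfl⟩ := hx
    obtain ⟨n, ds, h2, rfl⟩ := hy
    refine ⟨m + n, Fin.append cs ds, fun i => ?_, ?_⟩
    · refine Fin.addCases (fun i => ?_) (fun i => ?_) i
      · rw [Fin.append_left]; exact h1 i
      · rw [Fin.append_right]; exact h2 i
    · rw [Fin.sum_univ_add]
      simp
  | neg x _ hx =>
    obtain ⟨m, cs, h1, rfl⟩ := hx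
    refine ⟨m, fun i => - cs i, fun i => ?_, by simp⟩
    obtain ⟨v, hv, hp⟩ := h1 i
    refine ⟨v, hv, fun j x => ?_⟩
    simp only [Pi.neg_apply]
    rw [hp j x]

end Final

theorem main_thm
    {d k : ℕ} (hk1 : 1 ≤ k) (hkd : k ≤ d)
    (c : (Fin d → ℤ) → ℤ) (hconf : (Set.range c).Finite)
    (h : ∀ V : Submodule ℝ (Fin d → ℝ), Module.finrank ℝ V = k - 1 →
      ∃ f : (Fin d → ℤ) → ℤ, IsPoly f ∧ StronglyPeriodic (polyApply f c) ∧
        (intVecR '' Function.support f) ∩ (V : Set (Fin d → ℝ)) = {0}) :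
    ∃ (m : ℕ) (cs : Fin m → ((Fin d → ℤ) → ℤ)),
      (∀ i, KPeriodic k (cs i)) ∧ c = ∑ i, cs i := by
  obtain ⟨B, hB⟩ : ∃ B : ℤ, ∀ x, |c x| ≤ B := by
    obtain ⟨B, hB⟩ := (hconf.image (fun z : ℤ => |z|)).bddAbove
    exact ⟨B, fun x => hB ⟨c x, ⟨x, rfl⟩, rfl⟩⟩
  have hr : (fun x => (c x : ℝ)) ∈ Submodule.span ℝ {r : (Fin d → ℤ) → ℝ | RPer k r} := by
    refine real_decomp hkd (annI c) (fun V hV => ?_) k 0 (Nat.zero_add k) _ (B : ℝ) (fun x => ?_)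
      (annI_cast c) ?_
    · exact exists_list V (by omega) c B hB (h V hV)
    · have := hB x
      exact_mod_cast this
    · exact ⟨Fin.elim0, linearIndependent_empty_type, fun i => i.elim0⟩
  obtain ⟨F, hF⟩ := span_RPer hr
  exact SP_sum (QQ_sup_SP (d + 1) _ F (fun W _ => by omega) rfl c hF)

end PaperFormal

namespace PaperFormal

/-- If `1 ≤ k ≤ d` and a `d`-dimensional configuration `c` has, for every
`(k−1)`-dimensional linear subspace `V ⊆ ℝ^d`, a periodizer `f` with `supp(f) ∩ V = {0}`,
then `c` is a finite sum of `k`-periodic functions. -/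
theorem periodic_decomposition_with_specific_periodizers
    {d k : ℕ} (hk1 : 1 ≤ k) (hkd : k ≤ d)
    (c : (Fin d → ℤ) → ℤ) (hconf : (Set.range c).Finite)
    (h : ∀ V : Submodule ℝ (Fin d → ℝ), Module.finrank ℝ V = k - 1 →
      ∃ f : (Fin d → ℤ) → ℤ, IsPoly f ∧ StronglyPeriodic (polyApply f c) ∧
        (intVecR '' Function.support f) ∩ (V : Set (Fin d → ℝ)) = {0}) :
    ∃ (m : ℕ) (cs : Fin m → ((Fin d → ℤ) → ℤ)),
      (∀ i, KPeriodic k (cs i)) ∧ c = ∑ i, cs i := by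
  exact main_thm hk1 hkd c hconf h

end PaperFormal
end

section
/- Let V ⊆ ℝ^d be a linear subspace, let m ≥ 1, and let φ_1, …, φ_m be line polynomials in pairwise non-parallel directions v_1, …, v_m. Assume c : ℤ^d → ℂ is V-periodic, is annihilated by the product φ_1 ⋯ φ_m, and that for all i ≠ j one has span_ℝ(v_i, v_j) ∩ V = {0}. Then there exist functions c_1, …, c_m : ℤ^d → ℂ with c = c_1 + … + c_m such that each c_i is annihilated by φ_i and each c_i is V-periodic. Moreover, if all φ_i are difference polynomials and c takes only integer values, then c_1, …, c_m can be chosen with integer values. -/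
namespace PaperFormal


/-- The support of a polynomial as a finset. -/
noncomputable def IsPoly.supp {d : ℕ} {f : (Fin d → ℤ) → ℤ} (hf : IsPoly f) :
    Finset (Fin d → ℤ) :=
  Set.Finite.toFinset (s := Function.support f) hf

@[simp]
theorem IsPoly.mem_supp {d : ℕ} {f : (Fin d → ℤ) → ℤ} (hf : IsPoly f) (z : Fin d → ℤ) :
    z ∈ hf.supp ↔ f z ≠ 0 :=
  Set.Finite.mem_toFinset (s := Function.support f) hf

theorem polyApplyC_eq {d : ℕ} {f : (Fin d → ℤ) → ℤ} (hf : IsPoly f) (c : (Fin d → ℤ) → ℂ)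
    (u : Fin d → ℤ) :
    polyApplyC f c u = ∑ z ∈ IsPoly.supp hf, (f z : ℂ) * c (u - z) := by
  unfold polyApplyC
  apply finsum_eq_sum_of_support_subset
  intro z hz
  simp only [Function.mem_support] at hz
  simp only [Finset.mem_coe, IsPoly.mem_supp]
  intro h
  exact hz (by simp [h])

theorem polyApplyC_sub {d : ℕ} {f : (Fin d → ℤ) → ℤ} (hf : IsPoly f) (c c' : (Fin d → ℤ) → ℂ) :
    polyApplyC f (c - c') = polyApplyC f c - polyApplyC f c' := by
  funext u
  simp only [polyApplyC_eq hf, Pi.sub_apply, mul_sub, Finset.sum_sub_distrib]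

theorem polyApplyC_sum {d : ℕ} {ι : Type*} (s : Finset ι) {f : (Fin d → ℤ) → ℤ} (hf : IsPoly f)
    (c : ι → (Fin d → ℤ) → ℂ) :
    polyApplyC f (∑ i ∈ s, c i) = ∑ i ∈ s, polyApplyC f (c i) := by
  funext u
  simp only [polyApplyC_eq hf, Finset.sum_apply, Finset.mul_sum]
  rw [Finset.sum_comm]

theorem polyApplyC_zero {d : ℕ} (f : (Fin d → ℤ) → ℤ) :
    polyApplyC f (0 : (Fin d → ℤ) → ℂ) = 0 := by
  funext u
  simp [polyApplyC]

theorem polyApplyC_comm {d : ℕ} {f g : (Fin d → ℤ) → ℤ} (hf : IsPoly f) (hg : IsPoly g)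
    (c : (Fin d → ℤ) → ℂ) :
    polyApplyC f (polyApplyC g c) = polyApplyC g (polyApplyC f c) := by
  funext u
  simp only [polyApplyC_eq hf, polyApplyC_eq hg, Finset.mul_sum]
  rw [Finset.sum_comm]
  refine Finset.sum_congr rfl fun x _ => Finset.sum_congr rfl fun y _ => ?_
  rw [sub_right_comm]
  ring

theorem polyApplyC_shift {d : ℕ} {f : (Fin d → ℤ) → ℤ} (hf : IsPoly f) (c : (Fin d → ℤ) → ℂ)
    (p : Fin d → ℤ) :
    polyApplyC f (fun u => c (u + p)) = fun u => polyApplyC f c (u + p) := by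
  funext u
  simp only [polyApplyC_eq hf]
  refine Finset.sum_congr rfl fun x _ => ?_
  rw [sub_add_eq_add_sub]

theorem foldr_comm {d : ℕ} {f : (Fin d → ℤ) → ℤ} (hf : IsPoly f) (c : (Fin d → ℤ) → ℂ)
    (l : List ((Fin d → ℤ) → ℤ)) (hl : ∀ g ∈ l, IsPoly g) :
    l.foldr polyApplyC (polyApplyC f c) = polyApplyC f (l.foldr polyApplyC c) := by
  induction l with
  | nil => rfl
  | cons g l ih =>
    simp only [List.foldr_cons]
    rw [ih fun g' h => hl g' (List.mem_cons_of_mem _ h),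
      polyApplyC_comm (hl g List.mem_cons_self) hf]

/-- Recursion along a rank function. -/
theorem exists_rec {α β : Type*} (μ : α → ℕ) (b : β) (F : α → (α → β) → β) :
    ∃ c : α → β, ∀ x, c x = F x (fun y => if μ y < μ x then c y else b) := by
  classical
  have wf : WellFounded fun x y : α => μ x < μ y := (measure μ).wf
  refine ⟨wf.fix fun x IH => F x (fun y => if h : μ y < μ x then IH y h else b), fun x => ?_⟩
  rw [wf.fix_eq]
  congr 1

/-- A separating integral functional. -/
theorem exists_functional {d : ℕ} (V : Submodule ℝ (Fin d → ℝ)) (w v : Fin d → ℤ)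
    (hnp : NonParallel w v)
    (hspan : Submodule.span ℝ {intVecR w, intVecR v} ⊓ V = ⊥) :
    ∃ (L : (Fin d → ℚ) →ₗ[ℚ] ℚ) (l : (Fin d → ℤ) →+ ℤ), (∀ x, L (intVecQ x) = l x) ∧
      L (intVecQ v) = 0 ∧ L (intVecQ w) ≠ 0 ∧ ∀ u, intVecR u ∈ V → l u = 0 := by
  classical
  let toR : (Fin d → ℚ) →ₗ[ℚ] (Fin d → ℝ) :=
    { toFun := fun x i => (x i : ℝ)
      map_add' := by intro x y; funext i; simp
      map_smul' := by intro q x; funext i; simp [Rat.smul_def] }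
  have toR_int : ∀ x : Fin d → ℤ, toR (intVecQ x) = intVecR x := by
    intro x; funext i; simp [toR, intVecQ, intVecR]
  have toR_inj : ∀ x, toR x = 0 → x = 0 := by
    intro x hx; funext i
    have := congrFun hx i
    simpa [toR] using this
  let U0 : Submodule ℚ (Fin d → ℚ) := Submodule.span ℚ {x | ∃ u, intVecR u ∈ V ∧ intVecQ u = x}
  have hU0 : ∀ a ∈ U0, toR a ∈ V := by
    have : U0 ≤ (V.restrictScalars ℚ).comap toR := by
      apply Submodule.span_le.2
      rintro x ⟨u, hu, rfl⟩
      simpa [toR_int] using hu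
    intro a ha
    simpa using this ha
  have hw : intVecQ w ∉ U0 ⊔ Submodule.span ℚ {intVecQ v} := by
    intro h
    obtain ⟨a, ha, b, hb, hab⟩ := Submodule.mem_sup.1 h
    obtain ⟨q, rfl⟩ := Submodule.mem_span_singleton.1 hb
    have ha' : a = intVecQ w - q • intVecQ v := by rw [← hab]; simp
    have h1 : toR a ∈ Submodule.span ℝ {intVecR w, intVecR v} := by
      rw [ha', map_sub, map_smul, toR_int, toR_int]
      apply Submodule.sub_mem
      · exact Submodule.subset_span (by simp)
      · have : q • intVecR v = (q : ℝ) • intVecR v := by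
          funext i; simp [Rat.smul_def]
        rw [this]
        exact Submodule.smul_mem _ _ (Submodule.subset_span (by simp))
    have h2 : toR a ∈ Submodule.span ℝ {intVecR w, intVecR v} ⊓ V := ⟨h1, hU0 a ha⟩
    rw [hspan, Submodule.mem_bot] at h2
    have h3 := toR_inj _ h2
    rw [h3] at ha'
    have := LinearIndependent.pair_iff.1 hnp 1 (-q) (by rw [ha']; simp [sub_eq_add_neg])
    exact one_ne_zero this.1
  obtain ⟨L, hL1, hL2⟩ := Submodule.exists_le_ker_of_notMem hw
  obtain ⟨N, hN⟩ := IsLocalization.exist_integer_multiples_of_finset (nonZeroDivisors ℤ)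
    (Finset.univ.image fun i : Fin d => L (Pi.single i 1))
  have hN' : ∀ i : Fin d, ∃ a : ℤ, (a : ℚ) = ((N : ℤ) : ℚ) * L (Pi.single i 1) := by
    intro i
    obtain ⟨a, ha⟩ := hN (L (Pi.single i 1)) (by simp)
    exact ⟨a, by simpa using ha⟩
  choose a ha using hN'
  have hN0 : ((N : ℤ) : ℚ) ≠ 0 := by
    exact_mod_cast nonZeroDivisors.ne_zero N.2
  have hLx : ∀ x : Fin d → ℚ, L x = ∑ i, x i * L (Pi.single i 1) := by
    intro x
    conv_lhs => rw [← Finset.univ_sum_single x, map_sum]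
    refine Finset.sum_congr rfl fun i _ => ?_
    rw [← smul_eq_mul, ← map_smul, ← Pi.single_smul, smul_eq_mul, mul_one]
  let l : (Fin d → ℤ) →+ ℤ :=
    { toFun := fun x => ∑ i, x i * a i
      map_zero' := by simp
      map_add' := by intro x y; simp [add_mul, Finset.sum_add_distrib] }
  have hl : ∀ x, (((N : ℤ) : ℚ) • L) (intVecQ x) = l x := by
    intro x
    rw [LinearMap.smul_apply, hLx]
    simp only [smul_eq_mul, Finset.mul_sum, l, AddMonoidHom.coe_mk,
      ZeroHom.coe_mk, Int.cast_sum, Int.cast_mul, ha]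
    refine Finset.sum_congr rfl fun i _ => ?_
    simp only [intVecQ]; ring
  refine ⟨((N : ℤ) : ℚ) • L, l, hl, ?_, ?_, ?_⟩
  · have : L (intVecQ v) = 0 :=
      hL2 (Submodule.mem_sup_right (Submodule.mem_span_singleton_self _))
    simp [this]
  · simpa [hN0] using hL1
  · intro u hu
    have h0 : L (intVecQ u) = 0 :=
      hL2 (Submodule.mem_sup_left (Submodule.subset_span ⟨u, hu, rfl⟩))
    have := hl u
    rw [LinearMap.smul_apply, h0, smul_zero] at this
    exact_mod_cast this.symm

section recurrence
variable {d : ℕ} {f : (Fin d → ℤ) → ℤ}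

theorem apply_split (hf : IsPoly f) (z : Fin d → ℤ) (hz : f z ≠ 0) (c : (Fin d → ℤ) → ℂ)
    (x : Fin d → ℤ) : polyApplyC f c (x + z) =
      f z * c x + ∑ y ∈ (IsPoly.supp hf).erase z, (f y : ℂ) * c (x + z - y) := by
  classical
  rw [polyApplyC_eq hf, ← Finset.add_sum_erase _ _ (a := z) (by simpa using hz)]
  simp

/-- Uniqueness for the recurrence. -/
theorem rec_unique (hf : IsPoly f) (l : (Fin d → ℤ) →+ ℤ)
    (z0 z1 : Fin d → ℤ) (h0 : f z0 ≠ 0) (h1 : f z1 ≠ 0)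
    (hmin : ∀ z, f z ≠ 0 → z ≠ z0 → l z0 < l z) (hmax : ∀ z, f z ≠ 0 → z ≠ z1 → l z < l z1)
    (c : (Fin d → ℤ) → ℂ) (hc : polyApplyC f c = 0) (a : ℤ)
    (hstrip : ∀ x, a ≤ l x → l x < a + (l z1 - l z0) → c x = 0) : c = 0 := by
  classical
  have key : ∀ n : ℕ, ∀ x, a - n ≤ l x → l x < a + (l z1 - l z0) + n → c x = 0 := by
    intro n
    induction n with
    | zero => intro x; simpa using hstrip x
    | succ n ih =>
      intro x hx1 hx2
      push_cast at hx1 hx2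
      by_cases hlow : l x < a - n
      · have := apply_split hf z1 h1 c x
        rw [hc, Finset.sum_eq_zero] at this
        · simpa [h1] using this.symm
        · intro y hy
          simp only [Finset.mem_erase, IsPoly.mem_supp] at hy
          have i1 := hmax y hy.2 hy.1
          have i2 : l z0 ≤ l y := by
            by_cases h : y = z0
            · rw [h]
            · exact (hmin y hy.2 h).le
          rw [ih, mul_zero] <;> simp only [map_add, map_sub] <;> omega
      · by_cases hhigh : a + (l z1 - l z0) + n ≤ l x
        · have := apply_split hf z0 h0 c x
          rw [hc, Finset.sum_eq_zero] at this
          · simpa [h0] using this.symm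
          · intro y hy
            simp only [Finset.mem_erase, IsPoly.mem_supp] at hy
            have i1 := hmin y hy.2 hy.1
            have i2 : l y ≤ l z1 := by
              by_cases h : y = z1
              · rw [h]
              · exact (hmax y hy.2 h).le
            rw [ih, mul_zero] <;> simp only [map_add, map_sub] <;> omega
        · exact ih x (by omega) (by omega)
  funext x
  exact key ((l x - a).natAbs + (l z1 - l z0).natAbs + 1) x (by omega) (by omega)

/-- Existence for the recurrence. -/
theorem rec_exists (hf : IsPoly f) (l : (Fin d → ℤ) →+ ℤ)
    (z0 z1 : Fin d → ℤ) (h0 : f z0 ≠ 0) (h1 : f z1 ≠ 0)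
    (hmin : ∀ z, f z ≠ 0 → z ≠ z0 → l z0 < l z) (hmax : ∀ z, f z ≠ 0 → z ≠ z1 → l z < l z1)
    (A : AddSubgroup ℂ) (hA : ∀ z, f z ≠ 0 → ∀ a ∈ A, (f z : ℂ)⁻¹ * a ∈ A)
    (e : (Fin d → ℤ) → ℂ) (he : ∀ x, e x ∈ A) :
    ∃ c : (Fin d → ℤ) → ℂ, polyApplyC f c = e ∧ (∀ x, c x ∈ A) ∧
      ∀ x, 0 ≤ l x → l x < l z1 - l z0 → c x = 0 := by
  classical
  let μ : (Fin d → ℤ) → ℕ := fun x =>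
    if l x < 0 then (-l x).toNat else (l x + 1 - (l z1 - l z0)).toNat
  have hD : l z0 ≤ l z1 := by
    by_cases h : z1 = z0
    · rw [h]
    · exact (hmin z1 h1 h).le
  obtain ⟨c, hc⟩ := exists_rec μ (0 : ℂ) (fun x g =>
    if l x < 0 then
      (f z1 : ℂ)⁻¹ * (e (x + z1) -
        ∑ y ∈ (IsPoly.supp hf).erase z1, (f y : ℂ) * g (x + z1 - y))
    else if l x < l z1 - l z0 then 0
    else (f z0 : ℂ)⁻¹ * (e (x + z0) -
        ∑ y ∈ (IsPoly.supp hf).erase z0, (f y : ℂ) * g (x + z0 - y)))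
  refine ⟨c, ?_, ?_, ?_⟩
  · funext y
    by_cases hy : l y < l z1
    · obtain ⟨x, rfl⟩ : ∃ x, y = x + z1 := ⟨y - z1, by simp⟩
      have hx : l x < 0 := by simpa using hy
      rw [apply_split hf z1 h1, hc x, if_pos hx, mul_inv_cancel_left₀ (by exact_mod_cast h1)]
      rw [sub_add_eq_add_sub, sub_eq_iff_eq_add]
      congr 1
      refine Finset.sum_congr rfl fun y hy => ?_
      simp only [Finset.mem_erase, IsPoly.mem_supp] at hy
      have i1 := hmax y hy.2 hy.1
      have i2 : l z0 ≤ l y := by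
        by_cases h : y = z0
        · rw [h]
        · exact (hmin y hy.2 h).le
      dsimp only
      rw [if_pos]
      simp only [μ, map_add, map_sub]
      split_ifs <;> omega
    · obtain ⟨x, rfl⟩ : ∃ x, y = x + z0 := ⟨y - z0, by simp⟩
      have hx : ¬ l x < l z1 - l z0 := by
        simp only [map_add] at hy; omega
      have hx' : ¬ l x < 0 := by omega
      rw [apply_split hf z0 h0, hc x, if_neg hx', if_neg hx,
        mul_inv_cancel_left₀ (by exact_mod_cast h0)]
      rw [sub_add_eq_add_sub, sub_eq_iff_eq_add]
      congr 1
      refine Finset.sum_congr rfl fun y hy => ?_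
      simp only [Finset.mem_erase, IsPoly.mem_supp] at hy
      have i1 := hmin y hy.2 hy.1
      have i2 : l y ≤ l z1 := by
        by_cases h : y = z1
        · rw [h]
        · exact (hmax y hy.2 h).le
      dsimp only
      rw [if_pos]
      simp only [μ, map_add, map_sub]
      split_ifs <;> omega
  · have hsum : ∀ (s : Finset (Fin d → ℤ)) (g h : (Fin d → ℤ) → (Fin d → ℤ)) (k : (Fin d → ℤ) → ℂ),
        (∀ y, k y ∈ A) → ∑ y ∈ s, (f y : ℂ) * k (g y) ∈ A := by
      intro s g h k hk
      refine A.sum_mem fun y _ => ?_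
      rw [← zsmul_eq_mul]
      exact A.zsmul_mem (hk _) _
    have key : ∀ n : ℕ, ∀ x, μ x < n → c x ∈ A := by
      intro n
      induction n with
      | zero => intro x hx; omega
      | succ n ih =>
        intro x hx
        have hk : ∀ y, (if μ y < μ x then c y else 0) ∈ A := by
          intro y
          split_ifs with h
          · exact ih y (by omega)
          · exact A.zero_mem
        rw [hc x]
        split_ifs
        · exact hA z1 h1 _ (A.sub_mem (he _)
            (hsum _ (fun y => x + z1 - y) id (fun y => if μ y < μ x then c y else 0) hk))
        · exact A.zero_mem
        · exact hA z0 h0 _ (A.sub_mem (he _)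
            (hsum _ (fun y => x + z0 - y) id (fun y => if μ y < μ x then c y else 0) hk))
    exact fun x => key _ x (Nat.lt_succ_self _)
  · intro x hx1 hx2
    rw [hc x, if_neg (by omega), if_pos hx2]

end recurrence

/-- Key lemma: solving `ψ c = e` within the kernel of `φ`. -/
theorem key_lemma {d : ℕ} (V : Submodule ℝ (Fin d → ℝ)) (f g : (Fin d → ℤ) → ℤ)
    (w v : Fin d → ℤ) (hf : IsLinePoly f w) (hg : IsLinePoly g v) (hnp : NonParallel w v)
    (hspan : Submodule.span ℝ {intVecR w, intVecR v} ⊓ V = ⊥)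
    (A : AddSubgroup ℂ) (hA : ∀ z, f z ≠ 0 → ∀ a ∈ A, (f z : ℂ)⁻¹ * a ∈ A)
    (e : (Fin d → ℤ) → ℂ) (he : ∀ x, e x ∈ A) (heV : VPeriodicC V e) (heg : polyApplyC g e = 0) :
    ∃ c : (Fin d → ℤ) → ℂ, polyApplyC f c = e ∧ (∀ x, c x ∈ A) ∧ VPeriodicC V c ∧
      polyApplyC g c = 0 := by
  classical
  obtain ⟨L, l, hLl, hLv, hLw, hlV⟩ := exists_functional V w v hnp hspan
  obtain ⟨hfp, hw0, hfc, u, hu⟩ := hf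
  obtain ⟨hgp, hv0, hgc, t, ht⟩ := hg
  have hne : (IsPoly.supp hfp).Nonempty := by
    obtain ⟨a, ha⟩ := Set.nonempty_of_ncard_ne_zero (s := Function.support f) (by omega)
    exact ⟨a, by simpa using ha⟩
  have hinj : ∀ x y, f x ≠ 0 → f y ≠ 0 → l x = l y → x = y := by
    intro x y hx hy hxy
    obtain ⟨q, hq⟩ := hu x hx
    obtain ⟨r, hr⟩ := hu y hy
    have e1 := hLl x
    have e2 := hLl y
    rw [hq, map_add, map_smul, smul_eq_mul] at e1
    rw [hr, map_add, map_smul, smul_eq_mul, ← hxy, ← e1] at e2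
    have : r = q := mul_right_cancel₀ hLw (add_left_cancel e2)
    rw [this, ← hq] at hr
    funext i
    have := congrFun hr i
    simp only [intVecQ] at this
    exact_mod_cast this.symm
  obtain ⟨z0, hz0, hz0m⟩ := Finset.exists_min_image _ l hne
  obtain ⟨z1, hz1, hz1m⟩ := Finset.exists_max_image _ l hne
  simp only [IsPoly.mem_supp] at hz0 hz1 hz0m hz1m
  have hmin : ∀ z, f z ≠ 0 → z ≠ z0 → l z0 < l z := fun z hz hzz =>
    lt_of_le_of_ne (hz0m z hz) fun h => hzz (hinj _ _ hz hz0 h.symm)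
  have hmax : ∀ z, f z ≠ 0 → z ≠ z1 → l z < l z1 := fun z hz hzz =>
    lt_of_le_of_ne (hz1m z hz) fun h => hzz (hinj _ _ hz hz1 h)
  obtain ⟨c, hc, hcA, hcs⟩ := rec_exists hfp l z0 z1 hz0 hz1 hmin hmax A hA e he
  refine ⟨c, hc, hcA, ?_, ?_⟩
  · intro p hp hpV
    obtain ⟨k, hk, hke⟩ := heV p hp hpV
    refine ⟨k, hk, ?_⟩
    have hlp : l (k • p) = 0 := by rw [map_zsmul, hlV p hpV, smul_zero]
    have := rec_unique hfp l z0 z1 hz0 hz1 hmin hmax ((fun u => c (u + k • p)) - c) (by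
      rw [polyApplyC_sub hfp, polyApplyC_shift hfp, hc, sub_eq_zero]
      funext u
      exact hke u) 0 (by
      intro x hx1 hx2
      rw [Pi.sub_apply, hcs x hx1 (by omega), hcs, sub_zero] <;> rw [map_add, hlp] <;> omega)
    intro u
    exact sub_eq_zero.1 (congrFun this u)
  · have hlg : ∀ z, g z ≠ 0 → l z = l t := by
      intro z hz
      obtain ⟨q, hq⟩ := ht z hz
      have e1 := hLl z
      rw [hq, map_add, map_smul, hLv, smul_zero, add_zero, hLl t] at e1
      exact_mod_cast e1.symm
    apply rec_unique hfp l z0 z1 hz0 hz1 hmin hmax _ _ (l t)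
    · intro x hx1 hx2
      rw [polyApplyC_eq hgp]
      refine Finset.sum_eq_zero fun z hz => ?_
      have := hlg z (by simpa using hz)
      rw [hcs, mul_zero] <;> rw [map_sub] <;> omega
    · rw [polyApplyC_comm hfp hgp, hc, heg]

theorem VPeriodicC.poly {d : ℕ} {V : Submodule ℝ (Fin d → ℝ)} {f : (Fin d → ℤ) → ℤ}
    (hf : IsPoly f) {c : (Fin d → ℤ) → ℂ} (hc : VPeriodicC V c) :
    VPeriodicC V (polyApplyC f c) := by
  intro p hp hpV
  obtain ⟨k, hk, h⟩ := hc p hp hpV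
  refine ⟨k, hk, fun u => ?_⟩
  have := congrFun (polyApplyC_shift hf c (k • p)) u
  rw [← this]
  congr 1
  funext x
  exact h x

theorem VPeriodicC.sub {d : ℕ} {V : Submodule ℝ (Fin d → ℝ)}
    {c c' : (Fin d → ℤ) → ℂ} (hc : VPeriodicC V c) (hc' : VPeriodicC V c') :
    VPeriodicC V (c - c') := by
  intro p hp hpV
  obtain ⟨k, hk, h⟩ := hc p hp hpV
  obtain ⟨k', hk', h'⟩ := hc' p hp hpV
  have mult : ∀ (b : (Fin d → ℤ) → ℂ) (q : Fin d → ℤ), PeriodicC b q → ∀ n : ℤ,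
      PeriodicC b (n • q) := by
    intro b q hq n u
    have : Function.Periodic b q := hq
    exact this.zsmul n u
  refine ⟨k * k', mul_ne_zero hk hk', fun u => ?_⟩
  have e1 := mult c _ h k' u
  have e2 := mult c' _ h' k u
  rw [smul_smul] at e1 e2
  rw [mul_comm k' k] at e1
  simp only [Pi.sub_apply, e1, e2]

theorem VPeriodicC.sum {d n : ℕ} {V : Submodule ℝ (Fin d → ℝ)}
    (c : Fin n → (Fin d → ℤ) → ℂ) (hc : ∀ i, VPeriodicC V (c i)) :
    VPeriodicC V (∑ i, c i) := by
  have h0 : VPeriodicC V (0 : (Fin d → ℤ) → ℂ) := fun p _ _ => ⟨1, one_ne_zero, fun _ => rfl⟩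
  refine Finset.sum_induction _ _ (fun a b ha hb => ?_) h0 fun i _ => hc i
  have := ha.sub (h0.sub hb)
  simpa using this

theorem main_aux {d : ℕ} (V : Submodule ℝ (Fin d → ℝ)) (A : AddSubgroup ℂ) (m : ℕ) :
    ∀ (φ : Fin m → ((Fin d → ℤ) → ℤ)) (v : Fin m → (Fin d → ℤ))
    (_ : ∀ i, IsLinePoly (φ i) (v i))
    (_ : ∀ i j, i ≠ j → NonParallel (v i) (v j))
    (_ : ∀ i j, i ≠ j → Submodule.span ℝ {intVecR (v i), intVecR (v j)} ⊓ V = ⊥)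
    (_ : ∀ i z, φ i z ≠ 0 → ∀ a ∈ A, (φ i z : ℂ)⁻¹ * a ∈ A)
    (c : (Fin d → ℤ) → ℂ) (_ : VPeriodicC V c) (_ : ∀ u, c u ∈ A)
    (_ : (List.ofFn φ).foldr polyApplyC c = 0),
    ∃ cs : Fin m → ((Fin d → ℤ) → ℂ), c = ∑ i, cs i ∧
      ∀ i, (∀ u, cs i u ∈ A) ∧ polyApplyC (φ i) (cs i) = 0 ∧ VPeriodicC V (cs i) := by
  induction m with
  | zero =>
    intro φ v _ _ _ _ c _ _ hann
    refine ⟨fun _ => 0, by simpa using hann, fun i => i.elim0⟩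
  | succ m ih =>
    intro φ v hline hnp hspan hA c hcV hcA hann
    rw [List.ofFn_succ, List.foldr_cons, ← foldr_comm (hline 0).1] at hann
    swap
    · intro g hg
      obtain ⟨i, rfl⟩ := List.mem_ofFn.1 hg
      exact (hline _).1
    obtain ⟨es, hes, hes'⟩ := ih (fun i => φ i.succ) (fun i => v i.succ) (fun i => hline _)
      (fun i j hij => hnp _ _ (by simpa using hij)) (fun i j hij => hspan _ _ (by simpa using hij))
      (fun i => hA _) (polyApplyC (φ 0) c) (hcV.poly (hline 0).1) (by
        intro u
        rw [polyApplyC_eq (hline 0).1]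
        refine A.sum_mem fun y _ => ?_
        rw [← zsmul_eq_mul]
        exact A.zsmul_mem (hcA _) _) hann
    have hk := fun i : Fin m => key_lemma V (φ 0) (φ i.succ) (v 0) (v i.succ) (hline _) (hline _)
      (hnp _ _ (Fin.succ_ne_zero i).symm) (hspan _ _ (Fin.succ_ne_zero i).symm) A (hA 0) (es i)
      (hes' i).1 (hes' i).2.2 (hes' i).2.1
    choose b hb1 hb2 hb3 hb4 using hk
    refine ⟨Fin.cons (c - ∑ i, b i) b, ?_, ?_⟩
    · rw [Fin.sum_univ_succ]
      simp
    · intro i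
      refine Fin.cases ?_ (fun i => ?_) i
      · simp only [Fin.cons_zero]
        refine ⟨fun u => ?_, ?_, hcV.sub (VPeriodicC.sum _ hb3)⟩
        · rw [Pi.sub_apply, Finset.sum_apply]
          exact A.sub_mem (hcA u) (A.sum_mem fun i _ => hb2 i u)
        · rw [polyApplyC_sub (hline 0).1, polyApplyC_sum _ (hline 0).1, hes, sub_eq_zero]
          exact Finset.sum_congr rfl fun i _ => (hb1 i).symm
      · simp only [Fin.cons_succ]
        exact ⟨hb2 i, hb4 i, hb3 i⟩

/-- If `c` is `V`-periodic and annihilated by a product `φ₁ ⋯ φ_m` of line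
polynomials in pairwise non-parallel directions `v₁, …, v_m` with `span_ℝ(v_i, v_j) ∩ V = {0}`
for `i ≠ j`, then `c = c₁ + … + c_m` where each `c_i` is annihilated by `φ_i` and is
`V`-periodic; moreover with integer values if all `φ_i` are difference polynomials and `c` is
integer-valued. -/
theorem decomposition_along_line_polynomial_annihilator
    {d m : ℕ} (hm : 1 ≤ m) (V : Submodule ℝ (Fin d → ℝ))
    (φ : Fin m → ((Fin d → ℤ) → ℤ)) (v : Fin m → (Fin d → ℤ))
    (hline : ∀ i, IsLinePoly (φ i) (v i))
    (hnp : ∀ i j, i ≠ j → NonParallel (v i) (v j))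
    (hspan : ∀ i j, i ≠ j → Submodule.span ℝ {intVecR (v i), intVecR (v j)} ⊓ V = ⊥)
    (c : (Fin d → ℤ) → ℂ) (hcV : VPeriodicC V c)
    (hann : (List.ofFn φ).foldr polyApplyC c = 0) :
    (∃ cs : Fin m → ((Fin d → ℤ) → ℂ), c = ∑ i, cs i ∧
      ∀ i, polyApplyC (φ i) (cs i) = 0 ∧ VPeriodicC V (cs i)) ∧
    ((∀ u, ∃ z : ℤ, c u = (z : ℂ)) → (∀ i, ∃ w : Fin d → ℤ, w ≠ 0 ∧ φ i = diffPoly w) →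
      ∃ cs : Fin m → ((Fin d → ℤ) → ℂ), c = ∑ i, cs i ∧
        ∀ i, (∀ u, ∃ z : ℤ, cs i u = (z : ℂ)) ∧
          polyApplyC (φ i) (cs i) = 0 ∧ VPeriodicC V (cs i)) := by
  constructor
  · obtain ⟨cs, h1, h2⟩ := main_aux V ⊤ m φ v hline hnp hspan (fun _ _ _ _ _ => trivial) c hcV
      (fun _ => trivial) hann
    exact ⟨cs, h1, fun i => (h2 i).2⟩
  · intro hcint hdiff
    have hmem : ∀ x : ℂ, x ∈ (Int.castAddHom ℂ).range ↔ ∃ z : ℤ, x = (z : ℂ) := by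
      intro x
      simp only [AddMonoidHom.mem_range, Int.coe_castAddHom, eq_comm]
    obtain ⟨cs, h1, h2⟩ := main_aux V (Int.castAddHom ℂ).range m φ v hline hnp hspan (by
      intro i z hz a ha
      obtain ⟨w, hw, hφ⟩ := hdiff i
      rw [hφ] at hz ⊢
      unfold diffPoly at hz ⊢
      split_ifs at hz ⊢
      · simpa using ha
      · have : (((-1 : ℤ) : ℂ))⁻¹ * a = -a := by norm_num
        rw [this]
        exact neg_mem ha
      · exact absurd rfl hz) c hcV (fun u => (hmem _).2 (hcint u)) hann
    exact ⟨cs, h1, fun i => ⟨fun u => (hmem _).1 ((h2 i).1 u), (h2 i).2⟩⟩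

end PaperFormal
end

section
/- Let V ⊆ ℝ^d be a proper linear subspace (dim V ≤ d−1) and let c : ℤ^d → ℂ. If c has a periodizer g with supp(g) ∩ V = {0} (intersecting supp(g), viewed inside ℝ^d, with V), then c also has an annihilator f (a nonzero polynomial with fc = 0) such that supp(f) ∩ V = {0}. -/
namespace PaperFormal

/-- If `V ⊆ ℝ^d` is a proper linear subspace and `c : ℤ^d → ℂ` has a
periodizer `g` with `supp(g) ∩ V = {0}`, then `c` has an annihilator `f` with
`supp(f) ∩ V = {0}`. -/
theorem annihilator_avoiding_subspace_from_periodizer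
    {d : ℕ} (V : Submodule ℝ (Fin d → ℝ)) (hV : V ≠ ⊤)
    (c : (Fin d → ℤ) → ℂ)
    (g : (Fin d → ℤ) → ℤ) (hg : IsPoly g)
    (hgper : StronglyPeriodicC (polyApplyC g c))
    (hgsupp : (intVecR '' Function.support g) ∩ (V : Set (Fin d → ℝ)) = {0}) :
    ∃ f : (Fin d → ℤ) → ℤ, IsPoly f ∧ f ≠ 0 ∧ polyApplyC f c = 0 ∧
      (intVecR '' Function.support f) ∩ (V : Set (Fin d → ℝ)) = {0} := by
  obtain ⟨v, hli, hper⟩ := hgper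
  -- some period lies outside `V`
  have hex : ∃ i, intVecR (v i) ∉ V := by
    by_contra! hall
    apply hV
    let M : Matrix (Fin d) (Fin d) ℚ := fun i => intVecQ (v i)
    have hM : IsUnit M := Matrix.linearIndependent_rows_iff_isUnit.1 hli
    have hM2 : IsUnit (M.map (algebraMap ℚ ℝ)) := hM.map (algebraMap ℚ ℝ).mapMatrix
    have hli2 := Matrix.linearIndependent_rows_iff_isUnit.2 hM2
    have hspan := hli2.span_eq_top_of_card_eq_finrank' (by simp)
    rw [eq_top_iff, ← hspan, Submodule.span_le]
    rintro _ ⟨i, rfl⟩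
    have he : (M.map (algebraMap ℚ ℝ)).row i = intVecR (v i) := by
      funext j
      change ((v i j : ℚ) : ℝ) = (v i j : ℝ)
      norm_cast
    rw [he]
    exact hall i
  obtain ⟨i, hi⟩ := hex
  set w := v i with hw
  have hadd : ∀ a b : Fin d → ℤ, intVecR (a + b) = intVecR a + intVecR b := by
    intro a b; funext j; simp [intVecR]
  have hsmul : ∀ (n : ℕ) (a : Fin d → ℤ), intVecR (n • a) = (n : ℝ) • intVecR a := by
    intro n a; funext j; simp [intVecR]
  -- choose a multiple that moves the support of `g` off `V`
  have hbad : (⋃ s ∈ Function.support g, {n : ℕ | intVecR (s + n • w) ∈ V}).Finite := by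
    refine Set.Finite.biUnion hg fun s _ => Set.Subsingleton.finite ?_
    intro n hn m hm
    by_contra hnm
    apply hi
    have h1 := V.sub_mem hn hm
    rw [hadd, hadd, hsmul, hsmul, add_sub_add_left_eq_sub, ← sub_smul] at h1
    refine (V.smul_mem_iff ?_).1 h1
    rw [sub_ne_zero]
    exact_mod_cast hnm
  obtain ⟨n, hn⟩ := hbad.exists_notMem
  simp only [Set.mem_iUnion, Set.mem_ofPred_eq, not_exists] at hn
  have hperU : ∀ (k : ℕ) u, polyApplyC g c (u + k • w) = polyApplyC g c u := by
    intro k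
    induction k with
    | zero => intro u; simp
    | succ k ih => intro u; rw [succ_nsmul, ← add_assoc, hper i, ih]
  have hfV : ∀ u, intVecR u ∈ V → g (u - n • w) = 0 := by
    intro u hu
    by_contra h
    exact hn (u - n • w) h (by rwa [sub_add_cancel])
  have hshift : (Function.support fun u => g (u - n • w)).Finite :=
    Set.Finite.preimage (f := fun u => u - n • w) (sub_left_injective.injOn) hg
  have h0 : intVecR (0 : Fin d → ℤ) = 0 := by funext j; simp [intVecR]
  have hsupp : (intVecR '' Function.support (fun u => g (u - n • w) - g u)) ∩
      (V : Set (Fin d → ℝ)) = {0} := by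
    rw [← hgsupp]
    ext x
    constructor
    · rintro ⟨⟨u, hu, rfl⟩, hx⟩
      refine ⟨⟨u, ?_, rfl⟩, hx⟩
      simpa [hfV u hx, -nsmul_eq_mul] using hu
    · rintro ⟨⟨u, hu, rfl⟩, hx⟩
      refine ⟨⟨u, ?_, rfl⟩, hx⟩
      simpa [hfV u hx, -nsmul_eq_mul] using hu
  refine ⟨fun u => g (u - n • w) - g u, ?_, ?_, ?_, hsupp⟩
  · exact (hshift.union hg).subset (Function.support_sub _ _)
  · intro hf
    rw [hf] at hsupp
    simp at hsupp
  · funext u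
    have hs1 : (Function.support fun x => (g (x - n • w) : ℂ) * c (u - x)).Finite := by
      refine hshift.subset fun x hx hx0 => hx ?_
      simp only at hx0
      simp [hx0, -nsmul_eq_mul]
    have hs2 : (Function.support fun x => (g x : ℂ) * c (u - x)).Finite := by
      refine hg.subset fun x hx hx0 => hx ?_
      simp [hx0]
    have e1 : ∑ᶠ x, (g (x - n • w) : ℂ) * c (u - x) = polyApplyC g c (u - n • w) := by
      unfold polyApplyC
      refine Eq.trans (finsum_congr fun x => ?_) (finsum_comp_equiv (Equiv.subRight (n • w)))
      rw [Equiv.subRight_apply, sub_sub_sub_cancel_right]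
    have e2 : polyApplyC g c (u - n • w) = polyApplyC g c u := by
      have := hperU n (u - n • w)
      rw [sub_add_cancel] at this
      exact this.symm
    calc polyApplyC (fun u => g (u - n • w) - g u) c u
        = ∑ᶠ x, ((g (x - n • w) : ℂ) * c (u - x) - (g x : ℂ) * c (u - x)) := by
          unfold polyApplyC
          refine finsum_congr fun x => ?_
          push_cast
          ring
      _ = polyApplyC g c (u - n • w) - polyApplyC g c u := by
          rw [finsum_sub_distrib hs1 hs2, e1]; rfl
      _ = 0 := by rw [e2, sub_self]

end PaperFormal
end

section
/- Let d ≥ 1, let k ∈ {1,…,d}, and let c_1, …, c_m : ℤ^d → ℤ be k-periodic functions. Then for every (k−1)-dimensional linear subspace V ⊆ ℝ^d, the function c = c_1 + … + c_m has a periodizer f such that supp(f) ∩ V = {0} (intersecting supp(f), viewed inside ℝ^d, with V). -/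
namespace PaperFormal

lemma exists_period_notMem {d k : ℕ} (hk1 : 1 ≤ k) (c : (Fin d → ℤ) → ℤ) (h : KPeriodic k c)
    (V : Submodule ℝ (Fin d → ℝ)) (hV : Module.finrank ℝ V = k - 1) :
    ∃ w : Fin d → ℤ, Periodic c w ∧ intVecR w ∉ V := by
  obtain ⟨v, hv, hp⟩ := h
  by_contra hcon
  push Not at hcon
  have hR : LinearIndependent ℝ (fun i => intVecR (v i)) := by
    have h2 := (linearIndependent_algebraMap_comp_iff (S := ℝ)).2 hv
    have e : (fun i => intVecR (v i)) = fun i => (algebraMap ℚ ℝ) ∘ intVecQ (v i) := by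
      funext i j
      simp [intVecR, intVecQ]
    rw [e]
    exact h2
  have hmem : ∀ i, intVecR (v i) ∈ V := fun i => hcon (v i) (hp i)
  have h3 : LinearIndependent ℝ (fun i => (⟨intVecR (v i), hmem i⟩ : V)) :=
    LinearIndependent.of_comp V.subtype hR
  have h4 := h3.fintype_card_le_finrank
  rw [hV, Fintype.card_fin] at h4
  omega

lemma intVecR_add_smul {d : ℕ} (u w : Fin d → ℤ) (n : ℕ) :
    intVecR (u + n • w) = intVecR u + (n : ℝ) • intVecR w := by
  funext i
  simp [intVecR]

lemma exists_shift {d : ℕ} (V : Submodule ℝ (Fin d → ℝ)) (w : Fin d → ℤ) (hw : intVecR w ∉ V)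
    (s : Set (Fin d → ℤ)) (hs : s.Finite) : ∃ n : ℕ, ∀ u ∈ s, intVecR (u + n • w) ∉ V := by
  have hfin : (⋃ u ∈ s, {n : ℕ | intVecR (u + n • w) ∈ V}).Finite := by
    refine hs.biUnion fun u _ => Set.Subsingleton.finite ?_
    intro a ha b hb
    by_contra hab
    apply hw
    simp only [Set.mem_ofPred_eq, intVecR_add_smul] at ha hb
    have h1 := V.sub_mem ha hb
    have h2 : ((a : ℝ) - b) • intVecR w ∈ V := by
      convert h1 using 1
      rw [sub_smul]
      abel
    have hne : (a : ℝ) - b ≠ 0 := sub_ne_zero.2 (by exact_mod_cast hab)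
    exact (V.smul_mem_iff hne).1 h2
  obtain ⟨n, hn⟩ := hfin.infinite_compl.nonempty
  refine ⟨n, fun u hu hmem => hn ?_⟩
  exact Set.mem_biUnion hu hmem

lemma Periodic.nsmul {d : ℕ} {c : (Fin d → ℤ) → ℤ} {w : Fin d → ℤ} (h : Periodic c w) (n : ℕ) :
    Periodic c (n • w) := by
  induction n with
  | zero => intro u; simp
  | succ n ih =>
    intro u
    rw [succ_nsmul, ← add_assoc, h, ih]

lemma polyApply_shift_sub {d : ℕ} (f c : (Fin d → ℤ) → ℤ) (hf : IsPoly f) (w u : Fin d → ℤ) :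
    polyApply (fun x => f (x - w) - f x) c u = polyApply f c (u - w) - polyApply f c u := by
  have e : polyApply f c (u - w) = ∑ᶠ v, f (v - w) * c (u - v) := by
    unfold polyApply
    rw [← finsum_comp_equiv (Equiv.subRight w)]
    simp
  rw [e]
  unfold polyApply
  rw [← finsum_sub_distrib]
  · simp only [sub_mul]
  · refine (hf.preimage (sub_left_injective (b := w)).injOn).subset ?_
    intro x hx
    simp only [Set.mem_preimage, Function.mem_support] at hx ⊢
    exact left_ne_zero_of_mul hx
  · refine Set.Finite.subset hf ?_
    intro x hx
    simp only [Function.mem_support] at hx ⊢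
    exact left_ne_zero_of_mul hx

lemma exists_annihilator {d k m : ℕ} (hk1 : 1 ≤ k)
    (cs : Fin m → ((Fin d → ℤ) → ℤ)) (hper : ∀ i, KPeriodic k (cs i))
    (V : Submodule ℝ (Fin d → ℝ)) (hV : Module.finrank ℝ V = k - 1) (s : Finset (Fin m)) :
    ∃ f : (Fin d → ℤ) → ℤ, IsPoly f ∧ (∀ i ∈ s, ∀ u, polyApply f (cs i) u = 0) ∧ f 0 ≠ 0 ∧
      ∀ u, f u ≠ 0 → intVecR u ∈ V → u = 0 := by
  classical
  induction s using Finset.induction_on with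
  | empty =>
    refine ⟨Pi.single 0 1, ?_, by simp, by simp, ?_⟩
    · exact (Set.finite_singleton 0).subset (Pi.support_single_subset)
    · intro u hu _
      by_contra h
      exact hu (by simp [h])
  | insert j s _ ih =>
    obtain ⟨f, hf, hann, h0, hsup⟩ := ih
    obtain ⟨w, hw, hwV⟩ := exists_period_notMem hk1 (cs j) (hper j) V hV
    obtain ⟨n, hn⟩ := exists_shift V w hwV _ hf
    have hnw := hw.nsmul n
    have hzero : f (0 - n • w) = 0 := by
      by_contra h
      apply hn _ h
      have : intVecR (0 - n • w + n • w) = 0 := by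
        funext i
        simp [intVecR]
      rw [this]
      exact V.zero_mem
    refine ⟨fun x => f (x - n • w) - f x, ?_, ?_, ?_, ?_⟩
    · refine ((hf.preimage (sub_left_injective (b := n • w)).injOn).union hf).subset ?_
      intro x hx
      simp only [Set.mem_union, Set.mem_preimage, Function.mem_support] at hx ⊢
      by_contra hcon
      push Not at hcon
      exact hx (by rw [hcon.1, hcon.2, sub_zero])
    · intro i hi u
      rw [polyApply_shift_sub f _ hf]
      rcases Finset.mem_insert.1 hi with rfl | hi
      · rw [sub_eq_zero]
        unfold polyApply
        refine finsum_congr fun v => ?_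
        rw [← hnw (u - n • w - v)]
        congr 2
        abel
      · rw [hann i hi, hann i hi, sub_zero]
    · change f (0 - n • w) - f 0 ≠ 0
      rw [hzero, zero_sub]
      exact neg_ne_zero.2 h0
    · intro u hu huV
      by_cases h : f u = 0
      · exfalso
        change f (u - n • w) - f u ≠ 0 at hu
        rw [h, sub_zero] at hu
        apply hn _ hu
        rwa [sub_add_cancel]
      · exact hsup u h huV

/-- A finite sum of `k`-periodic functions `c₁, …, c_m : ℤ^d → ℤ` has, for
every `(k−1)`-dimensional linear subspace `V ⊆ ℝ^d`, a periodizer `f` with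
`supp(f) ∩ V = {0}`. -/
theorem sum_of_k_periodic_has_periodizer_avoiding_subspace
    {d k m : ℕ} (hd : 1 ≤ d) (hk1 : 1 ≤ k) (hkd : k ≤ d)
    (cs : Fin m → ((Fin d → ℤ) → ℤ)) (hper : ∀ i, KPeriodic k (cs i))
    (V : Submodule ℝ (Fin d → ℝ)) (hV : Module.finrank ℝ V = k - 1) :
    ∃ f : (Fin d → ℤ) → ℤ, IsPoly f ∧ StronglyPeriodic (polyApply f (∑ i, cs i)) ∧
      (intVecR '' Function.support f) ∩ (V : Set (Fin d → ℝ)) = {0} := by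
  obtain ⟨f, hf, hann, h0, hsup⟩ := exists_annihilator hk1 cs hper V hV Finset.univ
  refine ⟨f, hf, ?_, ?_⟩
  · have hz : polyApply f (∑ i, cs i) = 0 := by
      funext u
      have h1 : polyApply f (∑ i, cs i) u = ∑ i, polyApply f (cs i) u := by
        unfold polyApply
        simp only [Finset.sum_apply, Finset.mul_sum]
        refine finsum_sum_comm _ _ fun i _ => ?_
        refine Set.Finite.subset hf ?_
        intro x hx
        simp only [Function.mem_support] at hx ⊢
        exact left_ne_zero_of_mul hx
      rw [h1]
      exact Finset.sum_eq_zero fun i hi => hann i hi u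
    rw [hz]
    refine ⟨fun i => Pi.single i 1, ?_, fun i u => rfl⟩
    convert Pi.linearIndependent_single_one (Fin d) ℚ using 1
    funext i j
    by_cases h : j = i
    · subst h
      simp [intVecQ]
    · simp [intVecQ, h]
  · ext x
    constructor
    · rintro ⟨⟨u, hu, rfl⟩, hx⟩
      rw [hsup u hu hx]
      simp only [Set.mem_singleton_iff]
      funext i
      simp [intVecR]
    · intro hx
      rw [Set.mem_singleton_iff] at hx
      subst hx
      refine ⟨⟨0, h0, ?_⟩, V.zero_mem⟩
      funext i
      simp [intVecR]

end PaperFormal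
end
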